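/- arXiv:2307.10964 — 3 statements merged into one kernel-verified Lean document; each statement's English description precedes it below -/
import Mathlib

section
/- Let G be a countable group acting on a countable tree T such that every infinite geodesic 𝐯 in T has a finite initial segment whose G-stabilizer is finite. Then every infinite geodesic 𝐯 has a finite initial segment σ with Stab_G(σ) = Stab_G(𝐯). In particular, for any acylindrical action of a countable group on a countable tree, the induced orbit equivalence relation on the Gromov boundary ∂T is Borel hyperfinite. -/
open MeasureTheory Function Filter

/-! ### Countable Borel equivalence relations -/

section CBER

variable {X Y : Type*} [MeasurableSpace X] [MeasurableSpace Y]

/-- A countable Borel equivalence relation on a standard Borel space. -/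
def IsCBER (E : X → X → Prop) : Prop :=
  Equivalence E ∧ MeasurableSet {p : X × X | E p.1 p.2} ∧ ∀ x : X, {y | E x y}.Countable

/-- `B` meets every `E`-class in exactly one point. -/
def IsTransversal (E : X → X → Prop) (B : Set X) : Prop :=
  ∀ x : X, ∃! y : X, y ∈ B ∧ E x y

/-- A CBER is smooth if it admits a Borel transversal. -/
def SmoothRel (E : X → X → Prop) : Prop :=
  ∃ B : Set X, MeasurableSet B ∧ IsTransversal E B

/-- A Borel equivalence relation all of whose classes are finite. -/
def IsFiniteBorelEquivalence (E : X → X → Prop) : Prop :=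
  Equivalence E ∧ MeasurableSet {p : X × X | E p.1 p.2} ∧ ∀ x : X, {y | E x y}.Finite

/-- A CBER is (Borel) hyperfinite if it is the increasing union of a sequence of
Borel equivalence relations with finite classes. -/
def Hyperfinite (E : X → X → Prop) : Prop :=
  ∃ F : ℕ → X → X → Prop,
    (∀ i, IsFiniteBorelEquivalence (F i)) ∧
    (∀ i x y, F i x y → F (i + 1) x y) ∧
    (∀ x y, E x y ↔ ∃ i, F i x y)

/-- Borel reducibility of equivalence relations. -/
def BorelReducible (E : X → X → Prop) (F : Y → Y → Prop) : Prop :=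
  ∃ f : X → Y, Measurable f ∧ ∀ x x' : X, E x x' ↔ F (f x) (f x')

/-- Borel bireducibility of equivalence relations. -/
def BorelBireducible (E : X → X → Prop) (F : Y → Y → Prop) : Prop :=
  BorelReducible E F ∧ BorelReducible F E

/-- The saturation `[A]_E` of a set `A`: the smallest `E`-invariant set containing `A`. -/
def Saturation (E : X → X → Prop) (A : Set X) : Set X :=
  {x : X | ∃ a ∈ A, E x a}

end CBER

/-! ### ℓ¹ machinery, amenability of CBERs -/

section Amen

variable {X : Type*} [MeasurableSpace X]

/-- ℓ¹ distance between two summable functions. -/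
noncomputable def l1dist {A : Type*} (p q : A → ℝ) : ℝ :=
  ∑' a : A, |p a - q a|

/-- `p` is a probability measure concentrated on the `E`-class of `x`
(identified with its density). -/
def IsProbOnClass (E : X → X → Prop) (p : X → ℝ) (x : X) : Prop :=
  (∀ y, 0 ≤ p y) ∧ (∀ y, p y ≠ 0 → E x y) ∧ HasSum p 1

/-- A CBER is Borel amenable if there is a sequence of Borel assignments of probability
measures on the classes which are asymptotically invariant. -/
def BorelAmenable (E : X → X → Prop) : Prop :=
  ∃ p : ℕ → X → X → ℝ,
    (∀ i x, IsProbOnClass E (p i x) x) ∧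
    (∀ i, Measurable fun q : X × X => p i q.1 q.2) ∧
    (∀ x y, E x y → ∀ ε : ℝ, 0 < ε → ∀ᶠ i in atTop, l1dist (p i x) (p i y) < ε)

/-- A CBER is Borel 2-amenable if there is a double sequence of Borel assignments of
probability measures on the classes which are asymptotically invariant in the
iterated-limit sense. -/
def Borel2Amenable (E : X → X → Prop) : Prop :=
  ∃ p : ℕ → ℕ → X → X → ℝ,
    (∀ i j x, IsProbOnClass E (p i j x) x) ∧
    (∀ i j, Measurable fun q : X × X => p i j q.1 q.2) ∧
    (∀ x y, E x y → ∀ ε : ℝ, 0 < ε →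
      ∀ᶠ i in atTop, ∀ᶠ j in atTop, l1dist (p i j x) (p i j y) < ε)

/-- `E` is μ-hyperfinite: hyperfinite off a μ-null set. -/
def MuHyperfinite (E : X → X → Prop) (μ : Measure X) : Prop :=
  ∃ A : Set X, MeasurableSet A ∧ μ Aᶜ = 0 ∧ Hyperfinite (fun a b : A => E a b)

/-- `E` is μ-amenable: Borel amenable off a μ-null set. -/
def MuAmenable (E : X → X → Prop) (μ : Measure X) : Prop :=
  ∃ A : Set X, MeasurableSet A ∧ μ Aᶜ = 0 ∧ BorelAmenable (fun a b : A => E a b)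

/-- `E` is μ-2-amenable: Borel 2-amenable off a μ-null set. -/
def Mu2Amenable (E : X → X → Prop) (μ : Measure X) : Prop :=
  ∃ A : Set X, MeasurableSet A ∧ μ Aᶜ = 0 ∧ Borel2Amenable (fun a b : A => E a b)

/-- `E` is measure-hyperfinite: μ-hyperfinite for every Borel probability measure μ. -/
def MeasureHyperfinite (E : X → X → Prop) : Prop :=
  ∀ μ : Measure X, IsProbabilityMeasure μ → MuHyperfinite E μ

end Amen

/-! ### Reiter functions and uniform coamenability -/

section Reiter

/-- A (finitely or infinitely supported) probability function on a countable set. -/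
def IsProbFun {A : Type*} (p : A → ℝ) : Prop :=
  (∀ a, 0 ≤ p a) ∧ HasSum p 1

/-- The pushforward of `p : Prob(G)` under the orbit map `g ↦ g • x`. -/
noncomputable def pushMeasure {G X : Type*} [Group G] [MulAction G X]
    (p : G → ℝ) (x : X) : X → ℝ :=
  fun y => ∑' g : {g : G // g • x = y}, p g.1

/-- `p` is an `(S, ε)`-Reiter function for the action `G ↷ X`. -/
def IsReiterFun {G : Type*} (X : Type*) [Group G] [MulAction G X]
    (S : Finset G) (ε : ℝ) (p : G → ℝ) : Prop :=
  IsProbFun p ∧ ∀ s ∈ S, ∀ x : X, l1dist (pushMeasure p x) (pushMeasure p (s • x)) < ε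

/-- A subgroup `H ≤ G` is uniformly coamenable if the action `G ↷ G/H` admits
`(S, ε)`-Reiter functions for all finite `S ⊆ G` and all `ε > 0`. -/
def UniformlyCoamenable {G : Type*} [Group G] (H : Subgroup G) : Prop :=
  ∀ (S : Finset G) (ε : ℝ), 0 < ε → ∃ p : G → ℝ, IsReiterFun (G ⧸ H) S ε p

/-- The Reiter criterion for amenability of a countable group `Q`. -/
def ReiterAmenable (Q : Type*) [Group Q] : Prop :=
  ∀ (S : Finset Q) (ε : ℝ), 0 < ε → ∃ q : Q → ℝ, IsProbFun q ∧
    ∀ s ∈ S, l1dist q (fun x => q (s⁻¹ * x)) < ε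

end Reiter

/-! ### Trees, geodesics and the Gromov boundary -/

section Tree

variable {V : Type*} (T : SimpleGraph V)

/-- The space of infinite geodesics in the graph `T`. -/
def Geo : Set (ℕ → V) :=
  {v | Function.Injective v ∧ ∀ n, T.Adj (v n) (v (n + 1))}

/-- The shift map (the action of the generator of the monoid ℕ) on `Geo T`. -/
def geoShift (v : Geo T) : Geo T :=
  ⟨fun n => v.1 (n + 1),
   fun a b h => by have := v.2.1 h; omega,
   fun n => v.2.2 (n + 1)⟩

/-- Tail equivalence: the orbit equivalence relation of the shift action of the
monoid ℕ on `Geo T`, i.e. the equivalence relation generated by `v ∼ m • v`. -/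
def tailRel : Geo T → Geo T → Prop :=
  Relation.EqvGen fun a b => ∃ m : ℕ, b = (geoShift T)^[m] a

def tailSetoid : Setoid (Geo T) :=
  ⟨tailRel T, Relation.EqvGen.is_equivalence _⟩

/-- The Gromov boundary `∂T = Geo(T)/ℕ`. -/
def Bdry : Type _ := Quotient (tailSetoid T)

instance [MeasurableSpace V] : MeasurableSpace (Bdry T) :=
  inferInstanceAs (MeasurableSpace (Quotient (tailSetoid T)))

variable {G : Type*} [Group G] [MulAction G V]

/-- The action `G ↷ V` is by graph automorphisms of `T`. -/
def IsGraphAction (G : Type*) [Group G] [MulAction G V] : Prop :=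
  ∀ (g : G) (v w : V), T.Adj v w ↔ T.Adj (g • v) (g • w)

variable {T}

/-- The coordinatewise action of `G` on `Geo T`. -/
def geoSmul (h : IsGraphAction T G) (g : G) (v : Geo T) : Geo T :=
  ⟨fun n => g • v.1 n, (MulAction.injective g).comp v.2.1,
   fun n => (h g _ _).mp (v.2.2 n)⟩

lemma geoShift_geoSmul (h : IsGraphAction T G) (g : G) (v : Geo T) :
    geoShift T (geoSmul h g v) = geoSmul h g (geoShift T v) := rfl

lemma iterate_geoShift_geoSmul (h : IsGraphAction T G) (g : G) (m : ℕ) (v : Geo T) :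
    (geoShift T)^[m] (geoSmul h g v) = geoSmul h g ((geoShift T)^[m] v) := by
  induction m generalizing v with
  | zero => rfl
  | succ m ih =>
      rw [Function.iterate_succ_apply, Function.iterate_succ_apply,
        geoShift_geoSmul, ih]

lemma tailRel_geoSmul (h : IsGraphAction T G) (g : G) {v w : Geo T}
    (hvw : tailRel T v w) : tailRel T (geoSmul h g v) (geoSmul h g w) := by
  induction hvw with
  | rel a b hab =>
      obtain ⟨m, rfl⟩ := hab
      exact Relation.EqvGen.rel _ _ ⟨m, (iterate_geoShift_geoSmul h g m a).symm⟩
  | refl a => exact Relation.EqvGen.refl _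
  | symm a b _ ih => exact Relation.EqvGen.symm _ _ ih
  | trans a b c _ _ ih1 ih2 => exact Relation.EqvGen.trans _ _ _ ih1 ih2

/-- The induced action of `G` on the Gromov boundary `∂T`. -/
def bdrySmul (h : IsGraphAction T G) (g : G) : Bdry T → Bdry T :=
  Quotient.map (geoSmul h g) (fun _ _ hab => tailRel_geoSmul h g hab)

/-- The orbit equivalence relation `E_G^{∂T}` of the boundary action. -/
def bdryRel (h : IsGraphAction T G) : Bdry T → Bdry T → Prop :=
  fun x y => ∃ g : G, bdrySmul h g x = y

/-- The orbit equivalence relation `E_G^{Geo(T)}`. -/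
def geoRel (h : IsGraphAction T G) : Geo T → Geo T → Prop :=
  fun v w => ∃ g : G, geoSmul h g v = w

end Tree

/-! ### Stabilizers of geodesics and of their initial segments -/

section Stab

variable (G : Type*) {V : Type*} [Group G] [MulAction G V]

/-- The (pointwise) stabilizer of an infinite sequence of vertices. -/
def ptwiseStab (v : ℕ → V) : Subgroup G where
  carrier := {g : G | ∀ k : ℕ, g • v k = v k}
  one_mem' := fun k => one_smul _ _
  mul_mem' := fun {a b} ha hb k => by rw [mul_smul, hb k, ha k]
  inv_mem' := fun {a} ha k => inv_smul_eq_iff.mpr (ha k).symm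

/-- The stabilizer of the initial segment `(v 0, …, v n)`. -/
def initStab (v : ℕ → V) (n : ℕ) : Subgroup G where
  carrier := {g : G | ∀ k ≤ n, g • v k = v k}
  one_mem' := fun k _ => one_smul _ _
  mul_mem' := fun {a b} ha hb k hk => by rw [mul_smul, hb k hk, ha k hk]
  inv_mem' := fun {a} ha k hk => inv_smul_eq_iff.mpr (ha k hk).symm

/-- The stabilizer of a finite geodesic given as a tuple of vertices. -/
def finStab {n : ℕ} (f : Fin n → V) : Subgroup G where
  carrier := {g : G | ∀ i : Fin n, g • f i = f i}
  one_mem' := fun i => one_smul _ _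
  mul_mem' := fun {a b} ha hb i => by rw [mul_smul, hb i, ha i]
  inv_mem' := fun {a} ha i => inv_smul_eq_iff.mpr (ha i).symm

end Stab

/-! ### Orbit equivalence relations of monoid actions -/

section MonoidOrbit

/-- The orbit equivalence relation of a monoid action: the equivalence relation
generated by `x ∼ m • x`. -/
def monOrbitRel (M : Type*) {X : Type*} [Monoid M] [MulAction M X] :
    X → X → Prop :=
  Relation.EqvGen fun x y => ∃ m : M, y = m • x

end MonoidOrbit

/-! ### STATEMENT 10 -/

/-- An action `G ↷ T` on a tree is acylindrical if for every `k` there are `R, N` such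
that for any two vertices at distance at least `R`, at most `N` elements of `G` move
both vertices by at most `k`. -/
def Acylindrical {V : Type*} (T : SimpleGraph V) (G : Type*) [Group G] [MulAction G V] :
    Prop :=
  ∀ k : ℕ, ∃ R N : ℕ, ∀ x y : V, R ≤ T.dist x y →
    {g : G | T.dist x (g • x) ≤ k ∧ T.dist y (g • y) ≤ k}.Finite ∧
    Set.ncard {g : G | T.dist x (g • x) ≤ k ∧ T.dist y (g • y) ≤ k} ≤ N

/-!
A decreasing chain of subgroups with a finite member is eventually constant, and likewise for the
sets of group elements carrying the initial segments of `v` to those of `w`. Hence `v` and `w` lie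
in the same `G`-orbit as soon as all their initial segments do, so the sequence of orbits of initial
segments (the code of `v`) is a complete invariant for the action on geodesics. The shift of
geodesics descends to a map on codes which is finite-to-one on each of countably many Borel pieces,
again because the stabilizers of long segments are finite. Sending an end of the tree to the ray
towards it from a fixed root is a Borel section of `Geo T → ∂T`, and it reduces the boundary
relation to tail equivalence of codes under that map.

Such a tail equivalence relation is hyperfinite by the Dougherty–Jackson–Kechris argument: there are
decreasing Borel markers `B 0 ⊇ B 1 ⊇ ⋯`, each met by every forward orbit, whose intersection is
trivial apart from periodic points. Two points are tail equivalent iff for some `n` their orbits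
first hit `B n` at the same point, so the relation is an increasing union of the fibre relations of
first-hit maps; these maps have only σ-finite fibres, and bounding labels makes the classes finite.
-/

section Finiteness

lemma exists_eq_iInter_of_antitone_of_finite {α : Type*} {S : ℕ → Set α} (hS : Antitone S)
    {n : ℕ} (hn : (S n).Finite) : ∃ m, S m = ⋂ k, S k := by
  obtain ⟨m, hnm, hmin⟩ :=
    exists_minimalFor_of_wellFoundedLT (n ≤ ·) (fun m => (S m).ncard) ⟨n, le_rfl⟩
  have hfin : (S m).Finite := hn.subset (hS hnm)
  refine ⟨m, (Set.subset_iInter fun k => ?_).antisymm (Set.iInter_subset S m)⟩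
  have hle : S (max m k) ⊆ S m := hS (le_max_left m k)
  rw [← Set.eq_of_subset_of_ncard_le hle
    (hmin (hnm.trans (le_max_left m k)) (Set.ncard_le_ncard hle hfin)) hfin]
  exact hS (le_max_right m k)

end Finiteness

section MeasurableEq

variable {X Y : Type*} [MeasurableSpace X] [MeasurableSpace Y]

lemma measurableEq_of_injective [MeasurableEq Y] {f : X → Y} (hf : Measurable f)
    (hinj : Injective f) : MeasurableEq X :=
  ⟨by simpa only [Set.diagonal, comp_apply, hinj.eq_iff] using
    measurableSet_eq_fun (hf.comp measurable_fst) (hf.comp measurable_snd)⟩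

lemma measurableEq_of_countablySeparated [MeasurableSpace.CountablySeparated X] :
    MeasurableEq X :=
  let ⟨_, hf, hinj⟩ := MeasurableSpace.measurable_injection_nat_bool_of_countablySeparated X
  measurableEq_of_injective hf hinj

end MeasurableEq

section SigmaFiniteToOne

variable {X Y Z : Type*} [MeasurableSpace X]

/-- A map is σ-finite-to-one if its domain is the increasing union of countably many measurable
sets on each of which it is finite-to-one. The sets are encoded as the sublevel sets of a
measurable `ℕ`-valued function. -/
def SigmaFiniteToOne (f : X → Y) : Prop :=
  ∃ l : X → ℕ, Measurable l ∧ ∀ y K, {x | f x = y ∧ l x ≤ K}.Finite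

namespace SigmaFiniteToOne

lemma of_countable_cover {ι : Type*} [Countable ι] {f : X → Y} {A : ι → Set X}
    (hA : ∀ i, MeasurableSet (A i))
    (hcover : ∀ x, ∃ i, x ∈ A i ∧ ∀ y, {x' ∈ A i | f x' = y}.Finite) :
    SigmaFiniteToOne f := by
  classical
  obtain ⟨e, he⟩ := exists_injective_nat ι
  let I : Set ι := {i | ∀ y, {x' ∈ A i | f x' = y}.Finite}
  have hlabel : ∀ x, ∃ k, ∃ i ∈ I, e i = k ∧ x ∈ A i := fun x =>
    let ⟨i, hx, hi⟩ := hcover x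
    ⟨e i, i, hi, rfl, hx⟩
  refine ⟨fun x => Nat.find (hlabel x), measurable_find hlabel fun k => ?_, fun y K => ?_⟩
  · rw [show {x | ∃ i ∈ I, e i = k ∧ x ∈ A i} = ⋃ i ∈ I ∩ {i | e i = k}, A i by
      ext x; simp [and_assoc]]
    exact .biUnion (Set.to_countable _) fun i _ => hA i
  · have hfin : {i | e i ≤ K}.Finite := (Set.finite_Iic K).preimage he.injOn
    refine ((hfin.inter_of_left I).biUnion fun i hi => hi.2 y).subset fun x ⟨hxy, hxK⟩ => ?_
    obtain ⟨i, hi, hik, hxi⟩ := Nat.find_spec (hlabel x)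
    exact Set.mem_biUnion ⟨hik.trans_le hxK, hi⟩ ⟨hxi, hxy⟩

lemma of_injective {f : X → Y} (hf : Injective f) : SigmaFiniteToOne f :=
  ⟨fun _ => 0, measurable_const, fun _ _ =>
    Set.Subsingleton.finite fun _ hx _ hx' => hf (hx.1.trans hx'.1.symm)⟩

lemma comp [MeasurableSpace Y] {g : Y → Z} {f : X → Y} (hg : SigmaFiniteToOne g)
    (hf : SigmaFiniteToOne f) (hfm : Measurable f) : SigmaFiniteToOne (g ∘ f) := by
  obtain ⟨l, hl, hlfin⟩ := hg
  obtain ⟨k, hk, hkfin⟩ := hf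
  refine ⟨fun x => max (l (f x)) (k x), (hl.comp hfm).max hk, fun z K => ?_⟩
  refine ((hlfin z K).biUnion fun y _ => hkfin y K).subset fun x ⟨hxz, hxK⟩ => ?_
  exact Set.mem_biUnion (x := f x) ⟨hxz, (le_max_left _ _).trans hxK⟩
    ⟨rfl, (le_max_right _ _).trans hxK⟩

lemma iterate {f : X → X} (hf : SigmaFiniteToOne f) (hfm : Measurable f) :
    ∀ n, SigmaFiniteToOne f^[n]
  | 0 => of_injective injective_id
  | n + 1 => (hf.iterate hfm n).comp hf hfm

lemma glue {f : ℕ → X → Y} (hf : ∀ n, SigmaFiniteToOne (f n)) {τ : X → ℕ} (hτ : Measurable τ) :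
    SigmaFiniteToOne fun x => f (τ x) x := by
  choose l hl hlfin using hf
  refine of_countable_cover (ι := ℕ × ℕ) (A := fun i => {x | τ x = i.1 ∧ l i.1 x ≤ i.2})
    (fun i => (hτ (measurableSet_singleton i.1)).inter (hl i.1 measurableSet_Iic))
    fun x => ⟨(τ x, l (τ x) x), ⟨rfl, le_rfl⟩, fun y => ?_⟩
  refine (hlfin (τ x) y (l (τ x) x)).subset ?_
  rintro x' ⟨⟨hτx, hlx⟩, rfl⟩
  exact ⟨by simp only [hτx], hlx⟩

end SigmaFiniteToOne

end SigmaFiniteToOne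

section Hyperfinite

variable {X Y : Type*} [MeasurableSpace X] [MeasurableSpace Y]

lemma equivalence_eq_or_and_mem {α : Type*} {E : α → α → Prop} (hE : Equivalence E) (S : Set α) :
    Equivalence fun x y => x = y ∨ (E x y ∧ x ∈ S ∧ y ∈ S) where
  refl _ := .inl rfl
  symm := by
    rintro x y (rfl | ⟨hxy, hx, hy⟩)
    exacts [.inl rfl, .inr ⟨hE.symm hxy, hy, hx⟩]
  trans := by
    rintro x y z (rfl | ⟨hxy, hx, hy⟩) (rfl | ⟨hyz, hy', hz⟩)
    exacts [.inl rfl, .inr ⟨hyz, hy', hz⟩, .inr ⟨hxy, hx, hy⟩, .inr ⟨hE.trans hxy hyz, hx, hz⟩]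

theorem Hyperfinite.comap [MeasurableEq X] {E : Y → Y → Prop} (hE : Hyperfinite E) {f : X → Y}
    (hf : Measurable f) (hf' : SigmaFiniteToOne f) :
    Hyperfinite fun x x' => E (f x) (f x') := by
  obtain ⟨F, hF, hmono, hEF⟩ := hE
  obtain ⟨l, hl, hlfin⟩ := hf'
  refine ⟨fun n x x' => x = x' ∨ (F n (f x) (f x') ∧ l x ≤ n ∧ l x' ≤ n),
    fun n => ⟨?_, ?_, fun x => ?_⟩, ?_, fun x x' => ⟨fun h => ?_, ?_⟩⟩
  · exact equivalence_eq_or_and_mem ((hF n).1.comap f) {x | l x ≤ n}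
  · have hlevel : MeasurableSet {x | l x ≤ n} := hl measurableSet_Iic
    exact measurableSet_diagonal.union
      (((hF n).2.1.preimage (hf.prodMap hf)).inter (hlevel.prod hlevel))
  · refine ((Set.finite_singleton x).union
      (((hF n).2.2 (f x)).biUnion fun y _ => hlfin y n)).subset ?_
    rintro x' (rfl | ⟨hxx', -, hx'⟩)
    exacts [.inl rfl, .inr (Set.mem_biUnion hxx' ⟨rfl, hx'⟩)]
  · exact fun n x x' => Or.imp_right fun ⟨h, hx, hx'⟩ =>
      ⟨hmono n _ _ h, hx.trans n.le_succ, hx'.trans n.le_succ⟩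
  · obtain ⟨n, hn⟩ := (hEF _ _).1 h
    have hF_mono : Monotone fun n => F n (f x) (f x') :=
      monotone_nat_of_le_succ fun n => hmono n _ _
    exact ⟨n + l x + l x', .inr ⟨hF_mono (by lia) hn, by lia, by lia⟩⟩
  · rintro ⟨n, rfl | ⟨h, -⟩⟩
    exacts [(hEF _ _).2 ⟨0, (hF 0).1.refl _⟩, (hEF _ _).2 ⟨n, h⟩]

/-- The composite `s (n - 1) ∘ ⋯ ∘ s 0` of the first `n` maps of a sequence of self-maps. -/
def compSeq {α : Type*} (s : ℕ → α → α) : ℕ → α → α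
  | 0 => id
  | n + 1 => s n ∘ compSeq s n

lemma compSeq_eq_of_le {α : Type*} {s : ℕ → α → α} {x y : α} {m n : ℕ} (hmn : m ≤ n)
    (h : compSeq s m x = compSeq s m y) : compSeq s n x = compSeq s n y := by
  induction n, hmn using Nat.le_induction with
  | base => exact h
  | succ n _ ih => exact congrArg (s n) ih

lemma measurable_compSeq {s : ℕ → X → X} (hs : ∀ n, Measurable (s n)) :
    ∀ n, Measurable (compSeq s n)
  | 0 => measurable_id
  | n + 1 => (hs n).comp (measurable_compSeq hs n)

lemma finite_setOf_compSeq_eq {α : Type*} {s : ℕ → α → α} {l : ℕ → α → ℕ}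
    (hl : ∀ n y K, {x | s n x = y ∧ l n x ≤ K}.Finite) (K n : ℕ) (z : α) :
    {x | compSeq s n x = z ∧ ∀ i < n, l i (compSeq s i x) ≤ K}.Finite := by
  induction n generalizing z with
  | zero => exact (Set.finite_singleton z).subset fun x hx => hx.1
  | succ n ih =>
    refine ((hl n z K).biUnion fun y _ => ih y).subset fun x ⟨hxz, hxK⟩ => ?_
    exact Set.mem_biUnion (x := compSeq s n x) ⟨hxz, hxK n n.lt_succ_self⟩
      ⟨rfl, fun i hi => hxK i (by lia)⟩

/-- The relation identifying two points which some composite `compSeq s n` with `n ≤ K` maps to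
the same point, provided that all labels `l i` met by both points on the way are at most `K`. -/
def BoundedMerge {α : Type*} (s : ℕ → α → α) (l : ℕ → α → ℕ) (K : ℕ) (x y : α) : Prop :=
  ∃ n ≤ K, compSeq s n x = compSeq s n y ∧
    ∀ i < n, l i (compSeq s i x) ≤ K ∧ l i (compSeq s i y) ≤ K

lemma BoundedMerge.equivalence {α : Type*} (s : ℕ → α → α) (l : ℕ → α → ℕ) (K : ℕ) :
    Equivalence (BoundedMerge s l K) where
  refl x := ⟨0, K.zero_le, rfl, fun i hi => absurd hi i.not_lt_zero⟩
  symm := fun ⟨n, hn, h, hl⟩ => ⟨n, hn, h.symm, fun i hi => (hl i hi).symm⟩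
  trans := by
    rintro x y z ⟨m, hm, hxy, hlxy⟩ ⟨n, hn, hyz, hlyz⟩
    refine ⟨max m n, max_le hm hn, (compSeq_eq_of_le (le_max_left m n) hxy).trans
      (compSeq_eq_of_le (le_max_right m n) hyz), fun i hi => ⟨?_, ?_⟩⟩
    · rcases lt_or_ge i m with him | hmi
      · exact (hlxy i him).1
      · exact compSeq_eq_of_le hmi hxy ▸ (hlyz i (by lia)).1
    · rcases lt_or_ge i n with hin | hni
      · exact (hlyz i hin).2
      · exact compSeq_eq_of_le hni hyz ▸ (hlxy i (by lia)).2

lemma BoundedMerge.isFiniteBorelEquivalence [MeasurableEq X] {s : ℕ → X → X}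
    (hs : ∀ n, Measurable (s n)) {l : ℕ → X → ℕ} (hl : ∀ n, Measurable (l n))
    (hlfin : ∀ n y K, {x | s n x = y ∧ l n x ≤ K}.Finite) (K : ℕ) :
    IsFiniteBorelEquivalence (BoundedMerge s l K) := by
  refine ⟨equivalence s l K, ?_, fun x => ?_⟩
  · have hr := measurable_compSeq hs
    have heq (n : ℕ) : Measurable fun p : X × X => compSeq s n p.1 = compSeq s n p.2 :=
      ((hr n).comp measurable_fst).eq ((hr n).comp measurable_snd)
    have hle (i : ℕ) : Measurable fun x => l i (compSeq s i x) ≤ K :=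
      measurableSet_setOfPred.1 (((hl i).comp (hr i)) measurableSet_Iic)
    exact measurableSet_setOfPred.2 <| .exists fun n => .and measurable_const <|
      (heq n).and <| .forall fun i => .imp measurable_const <|
        ((hle i).comp measurable_fst).and ((hle i).comp measurable_snd)
  · refine ((Set.finite_Iic K).biUnion fun n _ =>
      finite_setOf_compSeq_eq hlfin K n (compSeq s n x)).subset fun y ⟨n, hn, h, hlab⟩ => ?_
    exact Set.mem_biUnion (Set.mem_Iic.2 hn) ⟨h.symm, fun i hi => (hlab i hi).2⟩

theorem hyperfinite_exists_compSeq_eq [MeasurableEq X] {s : ℕ → X → X}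
    (hs : ∀ n, Measurable (s n)) (hs' : ∀ n, SigmaFiniteToOne (s n)) :
    Hyperfinite fun x y => ∃ n, compSeq s n x = compSeq s n y := by
  choose l hl hlfin using hs'
  refine ⟨BoundedMerge s l, BoundedMerge.isFiniteBorelEquivalence hs hl hlfin, ?_, fun x y =>
    ⟨fun ⟨n, hn⟩ => ?_, fun ⟨_, n, _, hn, _⟩ => ⟨n, hn⟩⟩⟩
  · exact fun K x y ⟨n, hn, h, hlab⟩ =>
      ⟨n, by lia, h, fun i hi => by have := hlab i hi; lia⟩
  · obtain ⟨K, hK⟩ := ((Set.finite_Iio n).image fun i =>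
      l i (compSeq s i x) + l i (compSeq s i y)).bddAbove
    refine ⟨n + K, n, by lia, hn, fun i hi => ?_⟩
    have : l i (compSeq s i x) + l i (compSeq s i y) ≤ K := hK (Set.mem_image_of_mem _ hi)
    lia

end Hyperfinite

section TailEquiv

variable {Z : Type*} {f : Z → Z} {x y : Z}

/-- Two points are tail equivalent under `f` if their forward `f`-orbits eventually merge, possibly
after different numbers of steps. -/
def TailEquiv (f : Z → Z) (x y : Z) : Prop :=
  ∃ m n, f^[m] x = f^[n] y

lemma TailEquiv.symm : TailEquiv f x y → TailEquiv f y x :=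
  fun ⟨m, n, h⟩ => ⟨n, m, h.symm⟩

lemma TailEquiv.trans {z : Z} : TailEquiv f x y → TailEquiv f y z → TailEquiv f x z := by
  rintro ⟨a, b, hab⟩ ⟨c, d, hcd⟩
  refine ⟨c + a, b + d, ?_⟩
  rw [iterate_add_apply, hab, ← iterate_add_apply, add_comm, iterate_add_apply, hcd,
    ← iterate_add_apply]

lemma TailEquiv.iterate (h : TailEquiv f x y) (m n : ℕ) : TailEquiv f (f^[m] x) (f^[n] y) := by
  obtain ⟨a, b, hab⟩ := h
  refine ⟨n + a, m + b, ?_⟩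
  rw [← iterate_add_apply, ← iterate_add_apply, show n + a + m = m + n + a by lia,
    show m + b + n = m + n + b by lia, iterate_add_apply, hab, iterate_add_apply f (m + n) b]

lemma TailEquiv.exists_iterate_eq (h : TailEquiv f x y) (hx : x ∈ periodicPts f) :
    ∃ j, f^[j] y = x := by
  obtain ⟨a, b, hab⟩ := h
  obtain ⟨p, hp, hpx⟩ := hx
  refine ⟨a * p - a + b, ?_⟩
  rw [iterate_add_apply, ← hab, ← iterate_add_apply,
    Nat.sub_add_cancel (Nat.le_mul_of_pos_right a hp)]
  exact hpx.const_mul a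

lemma tailEquiv_restrict {A : Set Z} (hA : Set.MapsTo f A A) {x y : A} :
    TailEquiv hA.restrict x y ↔ TailEquiv f x y := by
  simp only [TailEquiv, Subtype.ext_iff, hA.coe_iterate_restrict]

lemma frequently_iterate_mem_iterate_iff {B : Set Z} {m : ℕ} :
    (∃ᶠ k in atTop, f^[k] (f^[m] x) ∈ B) ↔ ∃ᶠ k in atTop, f^[k] x ∈ B := by
  conv_rhs => rw [← map_add_atTop_eq_nat m, frequently_map]
  simp_rw [iterate_add_apply]

lemma TailEquiv.frequently_iterate_mem_iff (h : TailEquiv f x y) {B : Set Z} :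
    (∃ᶠ k in atTop, f^[k] x ∈ B) ↔ ∃ᶠ k in atTop, f^[k] y ∈ B := by
  obtain ⟨m, n, h⟩ := h
  rw [← frequently_iterate_mem_iterate_iff (m := m), h, frequently_iterate_mem_iterate_iff]

/-- The number of steps after which the forward orbit of `z` first enters `B`; the junk value `0` is
attained when the orbit misses `B`. -/
noncomputable def hitTime (f : Z → Z) (B : Set Z) (z : Z) : ℕ :=
  sInf {k | f^[k] z ∈ B}

/-- The first point of the forward orbit of `z` in `B`. -/
noncomputable def firstHit (f : Z → Z) (B : Set Z) (z : Z) : Z :=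
  f^[hitTime f B z] z

variable {B B' : Set Z} {z : Z}

lemma firstHit_mem (h : ∃ k, f^[k] z ∈ B) : firstHit f B z ∈ B :=
  Nat.sInf_mem h

lemma hitTime_le {k : ℕ} (h : f^[k] z ∈ B) : hitTime f B z ≤ k :=
  Nat.sInf_le h

lemma hitTime_anti (hB : B ⊆ B') (h : ∃ k, f^[k] z ∈ B) : hitTime f B' z ≤ hitTime f B z :=
  hitTime_le (hB (firstHit_mem h))

lemma firstHit_iterate {j : ℕ} (hj : j ≤ hitTime f B z) :
    firstHit f B (f^[j] z) = firstHit f B z := by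
  have htime : hitTime f B (f^[j] z) + j = hitTime f B z := by
    simpa only [hitTime, ← iterate_add_apply] using Nat.sInf_add (p := fun k => f^[k] z ∈ B) hj
  rw [firstHit, ← iterate_add_apply, htime, firstHit]

lemma firstHit_firstHit (hB : B ⊆ B') (h : ∃ k, f^[k] z ∈ B) :
    firstHit f B (firstHit f B' z) = firstHit f B z :=
  firstHit_iterate (hitTime_anti hB h)

lemma tailEquiv_of_firstHit_eq (h : firstHit f B x = firstHit f B y) : TailEquiv f x y :=
  ⟨_, _, h⟩

lemma compSeq_firstHit {B : ℕ → Set Z} (hB : Antitone B) (hz : ∀ n, ∃ k, f^[k] z ∈ B n) (n : ℕ) :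
    compSeq (fun n => firstHit f (B n)) (n + 1) z = firstHit f (B n) z := by
  induction n with
  | zero => rfl
  | succ n ih =>
    rw [compSeq, comp_apply, ih, firstHit_firstHit (hB n.le_succ) (hz (n + 1))]

variable [MeasurableSpace Z]

lemma measurable_hitTime (hf : Measurable f) (hB : MeasurableSet B)
    (hhit : ∀ z, ∃ k, f^[k] z ∈ B) : Measurable (hitTime f B) := by
  classical
  have hfind : hitTime f B = fun z => Nat.find (hhit z) := funext fun z => Nat.sInf_def (hhit z)
  exact hfind ▸ measurable_find hhit fun k => hf.iterate k hB

lemma measurable_firstHit (hf : Measurable f) (hB : MeasurableSet B)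
    (hhit : ∀ z, ∃ k, f^[k] z ∈ B) : Measurable (firstHit f B) :=
  (measurable_from_prod_countable_left (f := fun p : Z × ℕ => f^[p.2] p.1) hf.iterate).comp
    (measurable_id.prodMk (measurable_hitTime hf hB hhit))

lemma sigmaFiniteToOne_firstHit (hf : Measurable f) (hf' : SigmaFiniteToOne f)
    (hB : MeasurableSet B) (hhit : ∀ z, ∃ k, f^[k] z ∈ B) : SigmaFiniteToOne (firstHit f B) :=
  .glue (hf'.iterate hf) (measurable_hitTime hf hB hhit)

end TailEquiv

section Markers

variable {Z : Type*} {f : Z → Z}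

/-- A sequence of marker sets for `f`: decreasing sets met by every forward orbit whose intersection
consists of periodic points and contains at most one point of each tail class. -/
structure IsMarkerSequence (f : Z → Z) (B : ℕ → Set Z) : Prop where
  antitone : Antitone B
  exists_iterate_mem (n : ℕ) (z : Z) : ∃ k, f^[k] z ∈ B n
  iInter_subset : ⋂ n, B n ⊆ periodicPts f
  eq_of_tailEquiv : ∀ x ∈ ⋂ n, B n, ∀ y ∈ ⋂ n, B n, TailEquiv f x y → x = y

namespace IsMarkerSequence

variable {B : ℕ → Set Z} (hB : IsMarkerSequence f B) {x y z : Z}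
include hB

lemma eventually_firstHit_mem_or_le (z : Z) (K : ℕ) :
    ∀ᶠ n in atTop, firstHit f (B n) z ∈ ⋂ m, B m ∨ K ≤ hitTime f (B n) z := by
  have hsettle (i : ℕ) : ∀ᶠ n in atTop, f^[i] z ∈ B n → f^[i] z ∈ ⋂ m, B m := by
    by_cases hi : f^[i] z ∈ ⋂ m, B m
    · exact .of_forall fun _ _ => hi
    · obtain ⟨m, hm⟩ : ∃ m, f^[i] z ∉ B m := by simpa using hi
      filter_upwards [eventually_ge_atTop m] with n hmn hn using absurd (hB.antitone hmn hn) hm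
  filter_upwards [(Set.finite_Iio K).eventually_all.2 fun i _ => hsettle i] with n hn
  refine (lt_or_ge (hitTime f (B n) z) K).imp_left fun hlt => ?_
  exact hn _ hlt (firstHit_mem (hB.exists_iterate_mem n z))

lemma eventually_firstHit_mem (hz : ∃ i, f^[i] z ∈ ⋂ m, B m) :
    ∀ᶠ n in atTop, firstHit f (B n) z ∈ ⋂ m, B m := by
  obtain ⟨i, hi⟩ := hz
  filter_upwards [hB.eventually_firstHit_mem_or_le z (i + 1)] with n hn
  exact hn.resolve_right (hitTime_le (Set.mem_iInter.1 hi n)).not_gt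

lemma exists_iterate_mem_iInter (h : TailEquiv f x y) (hx : ∃ i, f^[i] x ∈ ⋂ m, B m) :
    ∃ i, f^[i] y ∈ ⋂ m, B m := by
  obtain ⟨i, hi⟩ := hx
  obtain ⟨j, hj⟩ := (h.iterate i 0).exists_iterate_eq (hB.iInter_subset hi)
  exact ⟨j, hj ▸ hi⟩

lemma exists_firstHit_eq (h : TailEquiv f x y) :
    ∃ n, firstHit f (B n) x = firstHit f (B n) y := by
  by_cases hx : ∃ i, f^[i] x ∈ ⋂ m, B m
  · have hy := hB.exists_iterate_mem_iInter h hx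
    obtain ⟨n, hxn, hyn⟩ :=
      ((hB.eventually_firstHit_mem hx).and (hB.eventually_firstHit_mem hy)).exists
    exact ⟨n, hB.eq_of_tailEquiv _ hxn _ hyn (h.iterate _ _)⟩
  · have hy : ¬∃ i, f^[i] y ∈ ⋂ m, B m := mt (hB.exists_iterate_mem_iInter h.symm) hx
    obtain ⟨a, b, hab⟩ := h
    obtain ⟨n, hxn, hyn⟩ := ((hB.eventually_firstHit_mem_or_le x a).and
      (hB.eventually_firstHit_mem_or_le y b)).exists
    have hxa := hxn.resolve_left fun hmem => hx ⟨_, hmem⟩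
    have hyb := hyn.resolve_left fun hmem => hy ⟨_, hmem⟩
    exact ⟨n, by rw [← firstHit_iterate hxa, hab, firstHit_iterate hyb]⟩

lemma tailEquiv_iff_exists_compSeq_eq : TailEquiv f x y ↔
    ∃ n, compSeq (fun n => firstHit f (B n)) n x = compSeq (fun n => firstHit f (B n)) n y := by
  have hcomp (n : ℕ) (z : Z) := compSeq_firstHit hB.antitone (hB.exists_iterate_mem · z) n
  constructor
  · intro h
    obtain ⟨n, hn⟩ := hB.exists_firstHit_eq h
    exact ⟨n + 1, by simpa only [hcomp] using hn⟩
  · rintro ⟨_ | n, hn⟩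
    · exact ⟨0, 0, hn⟩
    · exact tailEquiv_of_firstHit_eq (by simpa only [hcomp] using hn)

end IsMarkerSequence

lemma isMarkerSequence_sdiff {A : ℕ → Set Z} (hA : Antitone A)
    (hfreq : ∀ n z, ∃ᶠ k in atTop, f^[k] z ∈ A n)
    (heq : ∀ x ∈ ⋂ n, A n, ∀ y ∈ ⋂ n, A n, TailEquiv f x y → x = y) :
    IsMarkerSequence f fun n => A n \ ((⋂ m, A m) \ periodicPts f) where
  antitone _ _ hmn := Set.sdiff_subset_sdiff_left (hA hmn)
  exists_iterate_mem n z := by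
    obtain ⟨k, hk⟩ := (hfreq n z).exists
    by_cases hkper : f^[k] z ∈ periodicPts f
    · exact ⟨k, hk, fun h => h.2 hkper⟩
    obtain ⟨j, hkj, hj⟩ := frequently_atTop.1 (hfreq n z) (k + 1)
    by_contra! hmiss
    have hk' : f^[k] z ∈ ⋂ m, A m := by_contra fun h => hmiss k ⟨hk, fun h' => h h'.1⟩
    have hj' : f^[j] z ∈ ⋂ m, A m := by_contra fun h => hmiss j ⟨hj, fun h' => h h'.1⟩
    have hjk : f^[j] z = f^[k] z := heq _ hj' _ hk' (TailEquiv.iterate ⟨0, 0, rfl⟩ j k)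
    refine hkper ⟨j - k, by lia, ?_⟩
    rwa [IsPeriodicPt, IsFixedPt, ← iterate_add_apply, Nat.sub_add_cancel (by lia)]
  iInter_subset z hz := by
    have hzA : z ∈ ⋂ n, A n := Set.mem_iInter.2 fun n => (Set.mem_iInter.1 hz n).1
    exact by_contra fun hper => (Set.mem_iInter.1 hz 0).2 ⟨hzA, hper⟩
  eq_of_tailEquiv x hx y hy :=
    heq x (Set.iInter_mono (fun _ => Set.sdiff_subset) hx)
      y (Set.iInter_mono (fun _ => Set.sdiff_subset) hy)

/-- Decreasing sets decided by the sets `S n`: from the points of `refineMarkers f S n` in a tail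
class, keep those in `S n` if a forward orbit visits infinitely many of them, and otherwise those
outside `S n`. -/
def refineMarkers (f : Z → Z) (S : ℕ → Set Z) : ℕ → Set Z
  | 0 => Set.univ
  | n + 1 => {z ∈ refineMarkers f S n |
      z ∈ S n ↔ ∃ᶠ k in atTop, f^[k] z ∈ refineMarkers f S n ∩ S n}

variable {S : ℕ → Set Z} {x y : Z}

lemma refineMarkers_antitone (f : Z → Z) (S : ℕ → Set Z) : Antitone (refineMarkers f S) :=
  antitone_nat_of_succ_le fun _ _ hz => hz.1

lemma frequently_iterate_mem_refineMarkers (f : Z → Z) (S : ℕ → Set Z) (n : ℕ) (z : Z) :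
    ∃ᶠ k in atTop, f^[k] z ∈ refineMarkers f S n := by
  induction n with
  | zero => exact Frequently.of_forall fun _ => trivial
  | succ n ih =>
    simp only [refineMarkers, Set.mem_ofPred_eq, frequently_iterate_mem_iterate_iff]
    by_cases hS : ∃ᶠ k in atTop, f^[k] z ∈ refineMarkers f S n ∩ S n
    · exact hS.mono fun k hk => ⟨hk.1, iff_of_true hk.2 hS⟩
    · exact (ih.and_eventually (not_frequently.1 hS)).mono fun k hk =>
        ⟨hk.1, iff_of_false (fun hkS => hk.2 ⟨hk.1, hkS⟩) hS⟩

lemma TailEquiv.mem_iff_of_mem_refineMarkers (h : TailEquiv f x y)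
    (hx : x ∈ ⋂ n, refineMarkers f S n) (hy : y ∈ ⋂ n, refineMarkers f S n) (n : ℕ) :
    x ∈ S n ↔ y ∈ S n :=
  (Set.mem_iInter.1 hx (n + 1)).2.trans
    (h.frequently_iterate_mem_iff.trans (Set.mem_iInter.1 hy (n + 1)).2.symm)

variable [MeasurableSpace Z]

lemma measurableSet_frequently_iterate_mem (hf : Measurable f) {B : Set Z} (hB : MeasurableSet B) :
    MeasurableSet {z | ∃ᶠ k in atTop, f^[k] z ∈ B} := by
  simp only [frequently_atTop, measurableSet_setOfPred]
  exact .forall fun m => .exists fun k => .and measurable_const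
    (measurableSet_setOfPred.1 (hf.iterate k hB))

lemma measurableSet_refineMarkers (hf : Measurable f) (hS : ∀ n, MeasurableSet (S n)) :
    ∀ n, MeasurableSet (refineMarkers f S n)
  | 0 => .univ
  | n + 1 => by
    have hn := measurableSet_refineMarkers hf hS n
    exact hn.inter (measurableSet_setOfPred.2 (.iff (measurableSet_setOfPred.1 (hS n))
      (measurableSet_setOfPred.1 (measurableSet_frequently_iterate_mem hf (hn.inter (hS n))))))

lemma measurableSet_periodicPts [MeasurableEq Z] (hf : Measurable f) :
    MeasurableSet (periodicPts f) :=
  measurableSet_setOfPred.2 <| .exists fun n => .and measurable_const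
    ((hf.iterate n).eq measurable_id)

theorem exists_isMarkerSequence [MeasurableSpace.CountablySeparated Z] (hf : Measurable f) :
    ∃ B : ℕ → Set Z, (∀ n, MeasurableSet (B n)) ∧ IsMarkerSequence f B := by
  have := measurableEq_of_countablySeparated (X := Z)
  obtain ⟨S, hS, hsep⟩ := exists_seq_separating Z MeasurableSet.univ Set.univ
  have hA := measurableSet_refineMarkers hf hS
  exact ⟨_, fun n => (hA n).diff ((MeasurableSet.iInter hA).diff (measurableSet_periodicPts hf)),
    isMarkerSequence_sdiff (refineMarkers_antitone f S) (frequently_iterate_mem_refineMarkers f S)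
      fun x hx y hy h => hsep x trivial y trivial (h.mem_iff_of_mem_refineMarkers hx hy)⟩

/-- The Dougherty–Jackson–Kechris theorem on tail equivalence relations. -/
theorem hyperfinite_tailEquiv [MeasurableSpace.CountablySeparated Z] (hf : Measurable f)
    (hf' : SigmaFiniteToOne f) : Hyperfinite (TailEquiv f) := by
  have := measurableEq_of_countablySeparated (X := Z)
  obtain ⟨B, hBm, hB⟩ := exists_isMarkerSequence hf
  have hhit := hB.exists_iterate_mem
  rw [show TailEquiv f = _ from funext₂ fun x y => propext hB.tailEquiv_iff_exists_compSeq_eq]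
  exact hyperfinite_exists_compSeq_eq (fun n => measurable_firstHit hf (hBm n) (hhit n))
    fun n => sigmaFiniteToOne_firstHit hf hf' (hBm n) (hhit n)

end Markers

section Stabilizers

variable {G V : Type*} [Group G] [MulAction G V] {v w : ℕ → V} {n : ℕ}

variable (G) in
/-- The elements of `G` carrying the initial segment `(v 0, …, v n)` to `(w 0, …, w n)`: either
empty or a coset of `initStab G v n`. -/
def transporter (v w : ℕ → V) (n : ℕ) : Set G :=
  {g | ∀ i ≤ n, g • v i = w i}

lemma transporter_antitone (v w : ℕ → V) : Antitone (transporter G v w) :=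
  fun _ _ hmn _ hg i hi => hg i (hi.trans hmn)

lemma coe_ptwiseStab : (ptwiseStab G v : Set G) = ⋂ n, transporter G v v n := by
  ext g
  simp only [Set.mem_iInter]
  exact ⟨fun hg n i _ => hg i, fun hg i => hg i i le_rfl⟩

lemma finite_transporter (hv : (initStab G v n : Set G).Finite) :
    (transporter G v w n).Finite := by
  obtain hempty | ⟨g₀, hg₀⟩ := (transporter G v w n).eq_empty_or_nonempty
  · exact hempty ▸ Set.finite_empty
  · refine (hv.image (g₀ * ·)).subset fun g hg => ⟨g₀⁻¹ * g, fun i hi => ?_, by simp⟩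
    rw [mul_smul, hg i hi, ← hg₀ i hi, inv_smul_smul]

lemma finite_initStab_of_mem_transporter {g : G} (hg : g ∈ transporter G v w n)
    (hv : (initStab G v n : Set G).Finite) : (initStab G w n : Set G).Finite := by
  refine ((finite_transporter (w := w) hv).preimage (mul_left_injective g).injOn).subset
    fun h hh i hi => ?_
  rw [mul_smul, hg i hi, hh i hi]

variable (G) in
/-- Some finite initial segment of `v` has a finite stabilizer in `G`. -/
def HasFiniteInitStab (v : ℕ → V) : Prop :=
  ∃ n, (initStab G v n : Set G).Finite

namespace HasFiniteInitStab

theorem exists_initStab_eq_ptwiseStab (hv : HasFiniteInitStab G v) :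
    ∃ n, initStab G v n = ptwiseStab G v := by
  obtain ⟨n, hn⟩ := hv
  obtain ⟨m, hm⟩ := exists_eq_iInter_of_antitone_of_finite (transporter_antitone v v) hn
  exact ⟨m, SetLike.coe_injective (hm.trans coe_ptwiseStab.symm)⟩

lemma exists_smul_eq (hv : HasFiniteInitStab G v) (h : ∀ n, (transporter G v w n).Nonempty) :
    ∃ g : G, ∀ i, g • v i = w i := by
  obtain ⟨n, hn⟩ := hv
  obtain ⟨m, hm⟩ := exists_eq_iInter_of_antitone_of_finite (transporter_antitone v w)
    (finite_transporter hn)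
  obtain ⟨g, hg⟩ := h m
  exact ⟨g, fun i => Set.mem_iInter.1 (hm.subset hg) i i le_rfl⟩

end HasFiniteInitStab

end Stabilizers

section OrbitCode

variable (G V : Type*) [Group G] [MulAction G V]

/-- The `G`-orbits of `(n + 1)`-tuples of vertices. -/
abbrev SegmentOrbit (n : ℕ) : Type _ :=
  Quotient (MulAction.orbitRel G (Fin (n + 1) → V))

variable {V} in
/-- The code of a sequence of vertices: the `G`-orbits of all its initial segments. -/
def orbitCode (v : ℕ → V) (n : ℕ) : SegmentOrbit G V n :=
  ⟦fun i => v i⟧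

variable {G V}

/-- The map induced on codes by the shift of sequences. -/
def codeShift (p : ∀ n, SegmentOrbit G V n) (n : ℕ) : SegmentOrbit G V n :=
  (p (n + 1)).map (fun u i => u i.succ) fun _ _ hu =>
    let ⟨g, hg⟩ := MulAction.orbitRel_apply.1 hu
    MulAction.orbitRel_apply.2 ⟨g, funext fun i => congrFun hg i.succ⟩

variable {v w : ℕ → V} {n : ℕ}

lemma codeShift_orbitCode (v : ℕ → V) :
    codeShift (orbitCode G v) = orbitCode G fun n => v (n + 1) := rfl

lemma orbitCode_apply_eq_iff :
    orbitCode G v n = orbitCode G w n ↔ (transporter G v w n).Nonempty := by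
  rw [eq_comm, orbitCode, orbitCode, Quotient.eq]
  simp only [MulAction.orbitRel_apply, MulAction.mem_orbit_iff, funext_iff, Pi.smul_apply,
    Fin.forall_iff, Nat.lt_succ_iff]
  rfl

lemma orbitCode_smul (g : G) (v : ℕ → V) : (orbitCode G fun n => g • v n) = orbitCode G v :=
  funext fun _ => (orbitCode_apply_eq_iff.2 ⟨g, fun _ _ => rfl⟩).symm

lemma HasFiniteInitStab.orbitCode_eq_iff (hv : HasFiniteInitStab G v) :
    orbitCode G v = orbitCode G w ↔ ∃ g : G, ∀ i, g • v i = w i := by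
  constructor
  · exact fun h => hv.exists_smul_eq fun n => orbitCode_apply_eq_iff.1 (congrFun h n)
  · rintro ⟨g, hg⟩
    exact (orbitCode_smul g v).symm.trans (congrArg (orbitCode G) (funext hg))

lemma finite_setOf_codeShift_eq
    (hv : (initStab G (fun k => v (k + 1)) n : Set G).Finite) :
    {p ∈ Set.range (orbitCode G) | p (n + 1) = orbitCode G v (n + 1) ∧
      codeShift p = codeShift (orbitCode G v)}.Finite := by
  refine (hv.image fun g => orbitCode G fun k => k.casesOn (g • v 0) fun k => v (k + 1)).subset ?_
  rintro _ ⟨⟨w, rfl⟩, hsegment, htail⟩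
  obtain ⟨g, hg⟩ :=
    (HasFiniteInitStab.orbitCode_eq_iff (w := fun k => w (k + 1)) ⟨n, hv⟩).1 htail.symm
  obtain ⟨h, hh⟩ := orbitCode_apply_eq_iff.1 hsegment.symm
  refine ⟨g⁻¹ * h, fun i hi => ?_, ?_⟩
  · rw [mul_smul, hh (i + 1) (by lia), ← hg, inv_smul_smul]
  · rw [← orbitCode_smul g⁻¹ w]
    refine congrArg (orbitCode G) (funext fun k => ?_)
    cases k with
    | zero => exact (mul_smul _ _ _).trans (congrArg (g⁻¹ • ·) (hh 0 (Nat.zero_le _)))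
    | succ k => exact (inv_smul_eq_iff.2 (hg k).symm).symm

lemma mapsTo_codeShift {W : Set (ℕ → V)} (hshift : ∀ v ∈ W, (fun n => v (n + 1)) ∈ W) :
    Set.MapsTo codeShift (orbitCode G '' W) (orbitCode G '' W) := by
  rintro _ ⟨v, hv, rfl⟩
  exact ⟨_, hshift v hv, (codeShift_orbitCode v).symm⟩

section Measurability

variable [MeasurableSpace V]

lemma measurable_orbitCode : Measurable (orbitCode G : (ℕ → V) → _) :=
  measurable_pi_lambda _ fun n => measurable_quotient_mk''.comp <|
    measurable_pi_lambda _ fun i : Fin (n + 1) => measurable_pi_apply (i : ℕ)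

variable [Countable V] [DiscreteMeasurableSpace V]

lemma measurable_codeShift :
    Measurable (codeShift : (∀ n, SegmentOrbit G V n) → ∀ n, SegmentOrbit G V n) :=
  measurable_pi_lambda _ fun n => Measurable.of_discrete.comp (measurable_pi_apply (n + 1))

variable {W : Set (ℕ → V)} (hfin : ∀ v ∈ W, HasFiniteInitStab G v)
include hfin

lemma sigmaFiniteToOne_orbitCode :
    SigmaFiniteToOne (W.imageFactorization (orbitCode G)) := by
  refine .of_countable_cover (ι := Σ n, Fin (n + 1) → V)
    (A := fun u => {v | ∀ i : Fin (u.1 + 1), v.1 i = u.2 i}) (fun u => ?_) fun v => ?_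
  · exact measurableSet_setOfPred.2 <| .forall fun i : Fin (u.1 + 1) =>
      ((measurable_pi_apply (i : ℕ)).comp measurable_subtype_coe).eq measurable_const
  · obtain ⟨n, hn⟩ := hfin v v.2
    refine ⟨⟨n, fun i => v.1 i⟩, fun i => rfl, fun y => ?_⟩
    obtain hempty | ⟨w, hwv, hwy⟩ := Set.eq_empty_or_nonempty
      {w : W | (∀ i : Fin (n + 1), w.1 i = v.1 i) ∧ W.imageFactorization (orbitCode G) w = y}
    · exact hempty ▸ Set.finite_empty
    refine ((hn.image fun g k => g • w.1 k).preimage Subtype.val_injective.injOn).subset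
      fun w' ⟨hw'v, hw'y⟩ => ?_
    obtain ⟨g, hg⟩ := (hfin w w.2).orbitCode_eq_iff.1 (congrArg Subtype.val (hwy.trans hw'y.symm))
    refine ⟨g, fun i hi => ?_, funext hg⟩
    rw [← hwv ⟨i, by lia⟩, hg, hw'v ⟨i, by lia⟩, hwv ⟨i, by lia⟩]

variable (hshift : ∀ v ∈ W, (fun n => v (n + 1)) ∈ W)
include hshift

lemma sigmaFiniteToOne_codeShift :
    SigmaFiniteToOne ((mapsTo_codeShift (G := G) hshift).restrict) := by
  refine .of_countable_cover (ι := Σ n, SegmentOrbit G V n) (A := fun c => {p | p.1 c.1 = c.2})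
    (fun c => ?_) ?_
  · exact (measurable_pi_apply c.1).comp measurable_subtype_coe (measurableSet_singleton c.2)
  · rintro ⟨_, v, hv, rfl⟩
    obtain ⟨n, hn⟩ := hfin _ (hshift v hv)
    refine ⟨⟨n + 1, orbitCode G v (n + 1)⟩, rfl, fun y => ?_⟩
    obtain hempty | ⟨⟨_, w, hw, rfl⟩, hwv, hwy⟩ := Set.eq_empty_or_nonempty
      {p : orbitCode G '' W | p.1 (n + 1) = orbitCode G v (n + 1) ∧
        (mapsTo_codeShift hshift).restrict _ _ _ p = y}
    · exact hempty ▸ Set.finite_empty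
    obtain ⟨g, hg⟩ := orbitCode_apply_eq_iff.1 hwv.symm
    have hwfin : (initStab G (fun k => w (k + 1)) n : Set G).Finite :=
      finite_initStab_of_mem_transporter (g := g) (fun i hi => hg (i + 1) (by lia)) hn
    refine ((finite_setOf_codeShift_eq hwfin).preimage Subtype.val_injective.injOn).subset ?_
    rintro ⟨_, w', hw', rfl⟩ ⟨hw'v, hw'y⟩
    exact ⟨⟨w', rfl⟩, hw'v.trans hwv.symm, congrArg Subtype.val (hw'y.trans hwy.symm)⟩

theorem hyperfinite_tailEquiv_orbitCode :
    Hyperfinite fun v w : W => TailEquiv codeShift (orbitCode G v.1) (orbitCode G w.1) := by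
  have hcode : Measurable (W.imageFactorization (orbitCode G)) :=
    (measurable_orbitCode.comp measurable_subtype_coe).subtype_mk
  have hσ : Measurable (mapsTo_codeShift (G := G) hshift).restrict :=
    (measurable_codeShift.comp measurable_subtype_coe).subtype_mk
  have : MeasurableEq W := measurableEq_of_injective measurable_subtype_coe Subtype.val_injective
  simpa only [tailEquiv_restrict, Set.imageFactorization] using
    (hyperfinite_tailEquiv hσ (sigmaFiniteToOne_codeShift hfin hshift)).comap hcode
      (sigmaFiniteToOne_orbitCode hfin)

end Measurability

end OrbitCode

section Rays

variable {V : Type*} {T : SimpleGraph V} (hT : T.IsTree) (o : V)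

/-- The path from `o` to `u` in the tree `T`. -/
noncomputable def treePath (u : V) : T.Walk o u :=
  (hT.connected.exists_path_of_dist o u).choose

lemma isPath_treePath (u : V) : (treePath hT o u).IsPath :=
  (hT.connected.exists_path_of_dist o u).choose_spec.1

lemma length_treePath (u : V) : (treePath hT o u).length = T.dist o u :=
  (hT.connected.exists_path_of_dist o u).choose_spec.2

variable {o} {u w w' : V}

lemma treePath_eq_concat (h : T.Adj u w) (hd : T.dist o w = T.dist o u + 1) :
    treePath hT o w = (treePath hT o u).concat h := by
  refine (hT.existsUnique_path o w).unique (isPath_treePath hT o w) ?_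
  exact SimpleGraph.Walk.isPath_of_length_eq_dist _ <| by
    rw [SimpleGraph.Walk.length_concat, length_treePath, hd]

include hT in
lemma eq_of_adj_of_dist_eq_add_one (h : T.Adj w u) (h' : T.Adj w' u)
    (hd : T.dist o u = T.dist o w + 1) (hd' : T.dist o u = T.dist o w' + 1) : w = w' := by
  rw [← SimpleGraph.Walk.penultimate_concat (treePath hT o w) h, ← treePath_eq_concat hT h hd,
    treePath_eq_concat hT h' hd', SimpleGraph.Walk.penultimate_concat]

lemma getVert_treePath_of_adj (h : T.Adj u w) (hd : T.dist o w = T.dist o u + 1) {i : ℕ}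
    (hi : i ≤ T.dist o u) : (treePath hT o w).getVert i = (treePath hT o u).getVert i := by
  rw [treePath_eq_concat hT h hd, SimpleGraph.Walk.concat_eq_append,
    SimpleGraph.Walk.getVert_append', if_pos (hi.trans_eq (length_treePath hT o u).symm)]

variable {v : ℕ → V} (hv : v ∈ Geo T) {m : ℕ}

include hT hv

-- Only one neighbour of a vertex is closer to `o`, so a geodesic moving away cannot turn back.
lemma dist_geo_add (h : T.dist o (v m) ≤ T.dist o (v (m + 1))) (k : ℕ) :
    T.dist o (v (m + k)) = T.dist o (v m) + k := by
  suffices hsucc : ∀ k, T.dist o (v (m + k + 1)) = T.dist o (v (m + k)) + 1 by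
    induction k with
    | zero => rfl
    | succ k ih => rw [← add_assoc, hsucc, ih, add_assoc]
  intro k
  induction k with
  | zero => exact (hT.dist_eq_dist_add_one_of_adj o (hv.2 m)).resolve_left (by lia)
  | succ k ih =>
    refine (hT.dist_eq_dist_add_one_of_adj o (hv.2 (m + (k + 1)))).resolve_left fun hback => ?_
    have hturn : v (m + k) = v (m + k + 2) :=
      eq_of_adj_of_dist_eq_add_one hT (hv.2 (m + k)) (hv.2 (m + k + 1)).symm ih hback
    exact absurd (hv.1 hturn) (by lia)

lemma exists_dist_geo_add (o : V) : ∃ m, ∀ k, T.dist o (v (m + k)) = T.dist o (v m) + k :=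
  ⟨_, dist_geo_add hT hv (argmin_le (fun k => T.dist o (v k)) _)⟩

lemma getVert_treePath_geo (hm : ∀ k, T.dist o (v (m + k)) = T.dist o (v m) + k) {i k l : ℕ}
    (hi : i ≤ T.dist o (v m) + k) (hkl : k ≤ l) :
    (treePath hT o (v (m + l))).getVert i = (treePath hT o (v (m + k))).getVert i := by
  induction l, hkl using Nat.le_induction with
  | base => rfl
  | succ l hkl ih =>
    rw [← ih, ← getVert_treePath_of_adj hT (hv.2 (m + l)) (by rw [add_assoc, hm, hm, add_assoc])
      (by rw [hm]; lia), add_assoc]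

lemma tendsto_dist_geo (o : V) : Tendsto (fun m => T.dist o (v m)) atTop atTop := by
  obtain ⟨m, hm⟩ := exists_dist_geo_add hT hv o
  refine (tendsto_add_atTop_iff_nat m).1 ?_
  simpa only [add_comm _ m, hm] using
    tendsto_atTop_mono (fun k => Nat.le_add_left k (T.dist o (v m))) tendsto_id

lemma exists_eventually_getVert_treePath_eq (o : V) (i : ℕ) :
    ∃ a, ∀ᶠ m in atTop, (treePath hT o (v m)).getVert i = a := by
  obtain ⟨m, hm⟩ := exists_dist_geo_add hT hv o
  refine ⟨(treePath hT o (v (m + i))).getVert i, eventually_atTop.2 ⟨m + i, fun n hn => ?_⟩⟩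
  obtain ⟨l, rfl⟩ := Nat.exists_eq_add_of_le (le_of_add_le_left hn)
  exact getVert_treePath_geo hT hv hm (Nat.le_add_left _ _) (by lia)

omit hv
variable (o)

/-- The ray from `o` to the end of the geodesic `v`: the limit of the paths from `o` to `v m`. -/
noncomputable def rootedRay (v : Geo T) (i : ℕ) : V :=
  (exists_eventually_getVert_treePath_eq hT v.2 o i).choose

lemma eventually_getVert_treePath_eq_rootedRay (v : Geo T) (i : ℕ) :
    ∀ᶠ m in atTop, (treePath hT o (v.1 m)).getVert i = rootedRay hT o v i :=
  (exists_eventually_getVert_treePath_eq hT v.2 o i).choose_spec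

lemma rootedRay_eq_iff {v : Geo T} {i : ℕ} {a : V} :
    rootedRay hT o v i = a ↔ ∀ᶠ m in atTop, (treePath hT o (v.1 m)).getVert i = a := by
  have hray := eventually_getVert_treePath_eq_rootedRay hT o v i
  refine ⟨fun h => h ▸ hray, fun h => ?_⟩
  obtain ⟨m, hm, hm'⟩ := (hray.and h).exists
  exact hm.symm.trans hm'

lemma rootedRay_mem_geo (v : Geo T) : rootedRay hT o v ∈ Geo T := by
  have hray := eventually_getVert_treePath_eq_rootedRay hT o v
  have hlength := (tendsto_dist_geo hT v.2 o).eventually_ge_atTop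
  refine ⟨fun i j hij => ?_, fun i => ?_⟩
  · obtain ⟨m, hi, hj, hm⟩ := ((hray i).and ((hray j).and (hlength (i + j)))).exists
    rw [← length_treePath hT] at hm
    exact (isPath_treePath hT o _).getVert_injOn (by simp; lia) (by simp; lia)
      (hi.trans (hij.trans hj.symm))
  · obtain ⟨m, hi, hi', hm⟩ := ((hray i).and ((hray (i + 1)).and (hlength (i + 1)))).exists
    rw [← hi, ← hi']
    exact SimpleGraph.Walk.adj_getVert_succ _ (by rw [length_treePath]; exact hm)

lemma exists_rootedRay_add_eq (v : Geo T) : ∃ m n, ∀ k, rootedRay hT o v (m + k) = v.1 (n + k) := by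
  obtain ⟨n, hn⟩ := exists_dist_geo_add hT v.2 o
  refine ⟨T.dist o (v.1 n), n, fun k => (rootedRay_eq_iff hT o).2 ?_⟩
  refine eventually_atTop.2 ⟨n + k, fun m hm => ?_⟩
  obtain ⟨l, rfl⟩ := Nat.exists_eq_add_of_le (le_of_add_le_left hm)
  rw [getVert_treePath_geo hT v.2 hn le_rfl (by lia : k ≤ l), ← hn, ← length_treePath hT,
    SimpleGraph.Walk.getVert_length]

lemma rootedRay_comp_geoShift : rootedRay hT o ∘ geoShift T = rootedRay hT o :=
  funext fun v => funext fun i => (rootedRay_eq_iff hT o).2 <|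
    (tendsto_add_atTop_nat 1).eventually <| eventually_getVert_treePath_eq_rootedRay hT o v i

lemma measurable_rootedRay [Countable V] [MeasurableSpace V] [DiscreteMeasurableSpace V] :
    Measurable (rootedRay hT o) := by
  refine measurable_pi_lambda _ fun i => measurable_to_countable' fun a => ?_
  simp only [Set.preimage, Set.mem_singleton_iff, rootedRay_eq_iff, eventually_atTop]
  refine measurableSet_setOfPred.2 <| .exists fun N => .forall fun m => ?_
  have hm : Measurable fun v : Geo T => v.1 m := (measurable_pi_apply m).comp measurable_subtype_coe
  exact (Measurable.of_discrete (f := fun u => N ≤ m → (treePath hT o u).getVert i = a)).comp hm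

end Rays

section Boundary

variable {V : Type*} {T : SimpleGraph V}

lemma coe_geoShift_iterate (v : Geo T) (m : ℕ) :
    ((geoShift T)^[m] v).1 = fun k => v.1 (m + k) := by
  induction m with
  | zero => simp only [iterate_zero_apply, zero_add]
  | succ m ih =>
    rw [iterate_succ_apply']
    change (fun k => ((geoShift T)^[m] v).1 (k + 1)) = _
    simp only [ih, add_right_comm, add_assoc]

lemma tailRel_iff_tailEquiv {v w : Geo T} : tailRel T v w ↔ TailEquiv (geoShift T) v w := by
  constructor
  · intro h
    induction h with
    | rel v w h =>
      obtain ⟨m, rfl⟩ := h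
      exact ⟨m, 0, rfl⟩
    | refl v => exact ⟨0, 0, rfl⟩
    | symm v w _ ih => exact ih.symm
    | trans u v w _ _ huv hvw => exact huv.trans hvw
  · rintro ⟨m, n, h⟩
    refine .trans _ _ _ (.rel _ _ ⟨m, rfl⟩) ?_
    exact h ▸ .symm _ _ (.rel _ _ ⟨n, rfl⟩)

lemma TailEquiv.rootedRay_eq (hT : T.IsTree) (o : V) {v w : Geo T}
    (h : TailEquiv (geoShift T) v w) : rootedRay hT o v = rootedRay hT o w := by
  obtain ⟨m, n, h⟩ := h
  have hinv (m : ℕ) : rootedRay hT o ∘ (geoShift T)^[m] = rootedRay hT o :=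
    iterate_invariant (rootedRay_comp_geoShift hT o) m
  rw [← congrFun (hinv m) v, comp_apply, h, ← comp_apply (f := rootedRay hT o), hinv n]

theorem exists_measurable_section_bdry [Countable V] [MeasurableSpace V]
    [DiscreteMeasurableSpace V] (hT : T.IsTree) :
    ∃ φ : Bdry T → Geo T, Measurable φ ∧ ∀ x, Quotient.mk (tailSetoid T) (φ x) = x := by
  obtain ⟨o⟩ := hT.connected.nonempty
  refine ⟨Quotient.lift (fun v => ⟨rootedRay hT o v, rootedRay_mem_geo hT o v⟩) fun v w h =>
      Subtype.ext ((tailRel_iff_tailEquiv.1 h).rootedRay_eq hT o), ?_, fun x => ?_⟩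
  · exact measurable_from_quotient.2 (measurable_rootedRay hT o).subtype_mk
  · induction x using Quotient.inductionOn with
    | h v =>
      obtain ⟨m, n, h⟩ := exists_rootedRay_add_eq hT o v
      refine Quotient.sound (tailRel_iff_tailEquiv.2 ⟨m, n, Subtype.ext ?_⟩)
      rw [coe_geoShift_iterate, coe_geoShift_iterate]
      exact funext h

variable {G : Type*} [Group G] [MulAction G V] (hact : IsGraphAction T G)

lemma orbitCode_geoShift_iterate (v : Geo T) (m : ℕ) :
    orbitCode G ((geoShift T)^[m] v).1 = codeShift^[m] (orbitCode G v.1) :=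
  Semiconj.iterate_right (f := fun v : Geo T => orbitCode G v.1)
    (fun v => (codeShift_orbitCode v.1).symm) m v

lemma bdryRel_mk_iff_tailEquiv_orbitCode (hfin : ∀ v : Geo T, HasFiniteInitStab G v.1)
    {v w : Geo T} :
    bdryRel hact (Quotient.mk (tailSetoid T) v) (Quotient.mk (tailSetoid T) w) ↔
      TailEquiv codeShift (orbitCode G v.1) (orbitCode G w.1) := by
  calc
    _ ↔ ∃ g, TailEquiv (geoShift T) (geoSmul hact g v) w :=
      exists_congr fun g => Quotient.eq.trans tailRel_iff_tailEquiv
    _ ↔ ∃ m n, ∃ g, geoSmul hact g ((geoShift T)^[m] v) = (geoShift T)^[n] w := by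
      simp only [TailEquiv, iterate_geoShift_geoSmul]
      rw [exists_comm]
      exact exists_congr fun m => exists_comm
    _ ↔ TailEquiv codeShift (orbitCode G v.1) (orbitCode G w.1) := by
      simp only [TailEquiv, ← orbitCode_geoShift_iterate, (hfin _).orbitCode_eq_iff,
        Subtype.ext_iff, funext_iff]
      rfl

theorem hyperfinite_bdryRel [Countable V] [MeasurableSpace V] [DiscreteMeasurableSpace V]
    (hT : T.IsTree) (hfin : ∀ v : Geo T, HasFiniteInitStab G v.1) : Hyperfinite (bdryRel hact) := by
  obtain ⟨φ, hφ, hφsection⟩ := exists_measurable_section_bdry hT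
  have hφinj : Injective φ := LeftInverse.injective hφsection
  have : MeasurableEq (Geo T) :=
    measurableEq_of_injective measurable_subtype_coe Subtype.val_injective
  have : MeasurableEq (Bdry T) := measurableEq_of_injective hφ hφinj
  have hcode := hyperfinite_tailEquiv_orbitCode (W := Geo T) (fun v hv => hfin ⟨v, hv⟩)
    fun v hv => (geoShift T ⟨v, hv⟩).2
  simpa only [← bdryRel_mk_iff_tailEquiv_orbitCode hact hfin, hφsection] using
    hcode.comap hφ (.of_injective hφinj)

lemma Acylindrical.hasFiniteInitStab (hT : T.IsTree) (h : Acylindrical T G) (v : Geo T) :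
    HasFiniteInitStab G v.1 := by
  obtain ⟨R, N, hRN⟩ := h 0
  have hdist : T.dist (v.1 0) (v.1 R) = R := by
    simpa using dist_geo_add (o := v.1 0) (m := 0) hT v.2 (by simp) R
  refine ⟨R, (hRN _ _ hdist.ge).1.subset fun g hg => ?_⟩
  simp [hg 0 R.zero_le, hg R le_rfl]

end Boundary

theorem stabilized_segments_of_finite_segment_stabilizers_general
    {V : Type*} [Countable V] [MeasurableSpace V] [DiscreteMeasurableSpace V]
    (T : SimpleGraph V) (hT : T.IsTree)
    {G : Type*} [Group G] [MulAction G V] (hact : IsGraphAction T G)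
    (hfin : ∀ v : Geo T, ∃ n : ℕ, ((initStab G v.1 n : Subgroup G) : Set G).Finite) :
    (∀ v : Geo T, ∃ n : ℕ, initStab G v.1 n = ptwiseStab G v.1) ∧ Hyperfinite (bdryRel hact) :=
  ⟨fun v => HasFiniteInitStab.exists_initStab_eq_ptwiseStab (hfin v),
    hyperfinite_bdryRel hact hT hfin⟩

theorem stabilized_segments_of_finite_segment_stabilizers
    {V : Type*} [Countable V] [MeasurableSpace V] [DiscreteMeasurableSpace V]
    (T : SimpleGraph V) (hT : T.IsTree)
    {G : Type*} [Group G] [Countable G] [MulAction G V]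
    (hact : IsGraphAction T G) :
    ((∀ v : Geo T, ∃ n : ℕ, ((initStab G v.1 n : Subgroup G) : Set G).Finite) →
      ∀ v : Geo T, ∃ n : ℕ, initStab G v.1 n = ptwiseStab G v.1) ∧
    (Acylindrical T G → Hyperfinite (bdryRel hact)) := by
  exact ⟨fun hfin =>
      (stabilized_segments_of_finite_segment_stabilizers_general T hT hact hfin).1,
    fun hacyl => (stabilized_segments_of_finite_segment_stabilizers_general T hT hact
      (hacyl.hasFiniteInitStab hT)).2⟩
end

section
/- Let G be a countable group acting on a countable tree T and let σ be a finite geodesic in T. Then the set Geo_σ(T) of infinite geodesics 𝐯 extending σ with Stab_G(𝐯) = Stab_G(σ) is a closed subset of Geo(T), the restriction of E_G^{Geo(T)} to Geo_σ(T) equals the orbit equivalence relation of the action Stab_G(σ) ↷ Geo_σ(T), this action is trivial, and hence the restriction E_G^{Geo(T)} ↾ Geo_σ(T) is smooth. -/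
open MeasureTheory Function Filter

/-! ### STATEMENT 12 -/

/-- `Geo_σ(T)`: the infinite geodesics extending the finite geodesic `σ = f` whose
stabilizer equals the stabilizer of `σ`. -/
def GeoSeg (G : Type*) {V : Type*} [Group G] [MulAction G V] (T : SimpleGraph V)
    {n : ℕ} (f : Fin (n + 1) → V) : Set (Geo T) :=
  {v : Geo T | (∀ i : Fin (n + 1), v.1 i.1 = f i) ∧ ptwiseStab G v.1 = finStab G f}

/-! An element `g` carrying one extension of `σ` to another fixes `σ` pointwise, so on `Geo_σ(T)`
the `G`-orbit relation is already that of `Stab_G(σ)`. On `Geo_σ(T)` this stabilizer fixes every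
geodesic, so the orbit relation is equality there and the whole space is a transversal. Since
`Stab_G(v) ≤ Stab_G(σ)` for every extension `v` of `σ`, the equality of stabilizers defining
`Geo_σ(T)` amounts to the conditions `g • v k = v k` for `g ∈ Stab_G(σ)`, each of which is
closed. -/

theorem smoothRel_eq (X : Type*) [MeasurableSpace X] : SmoothRel (fun x y : X => x = y) :=
  ⟨Set.univ, .univ, fun x => ⟨x, ⟨Set.mem_univ x, rfl⟩, fun _ hy => hy.2.symm⟩⟩

section Stabilizers

variable {G V : Type*} [Group G] [MulAction G V] {n : ℕ} {f : Fin n → V} {v w : ℕ → V} {g : G}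

theorem mem_finStab_of_smul_eq (hv : ∀ i : Fin n, v i = f i) (hw : ∀ i : Fin n, w i = f i)
    (hg : ∀ k, g • v k = w k) : g ∈ finStab G f := fun i =>
  calc
    g • f i = g • v i := by rw [hv]
    _ = w i := hg i
    _ = f i := hw i

theorem ptwiseStab_le_finStab (hv : ∀ i : Fin n, v i = f i) : ptwiseStab G v ≤ finStab G f :=
  fun _ hg => mem_finStab_of_smul_eq hv hv hg

end Stabilizers

section GeodesicAction

variable {V G : Type*} {T : SimpleGraph V} [Group G] [MulAction G V] {n : ℕ} {v w : Geo T} {g : G}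

theorem geoSmul_eq_iff (hact : IsGraphAction T G) :
    geoSmul hact g v = w ↔ ∀ k, g • v.1 k = w.1 k :=
  Subtype.ext_iff.trans funext_iff

theorem geoRel_iff_exists_mem_finStab {f : Fin n → V} (hact : IsGraphAction T G)
    (hv : ∀ i : Fin n, v.1 i = f i) (hw : ∀ i : Fin n, w.1 i = f i) :
    geoRel hact v w ↔ ∃ g ∈ finStab G f, geoSmul hact g v = w :=
  ⟨fun ⟨g, hg⟩ => ⟨g, mem_finStab_of_smul_eq hv hw ((geoSmul_eq_iff hact).1 hg), hg⟩,
    fun ⟨g, _, hg⟩ => ⟨g, hg⟩⟩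

variable {f : Fin (n + 1) → V}

theorem mem_geoSeg_iff :
    v ∈ GeoSeg G T f ↔
      (∀ i : Fin (n + 1), v.1 i = f i) ∧ ∀ g ∈ finStab G f, ∀ k, g • v.1 k = v.1 k :=
  and_congr_right fun hv => (ptwiseStab_le_finStab hv).ge_iff_eq.symm

theorem geoSmul_eq_self_of_mem_geoSeg (hact : IsGraphAction T G) (hv : v ∈ GeoSeg G T f)
    (hg : g ∈ finStab G f) : geoSmul hact g v = v :=
  (geoSmul_eq_iff hact).2 ((mem_geoSeg_iff.1 hv).2 g hg)

theorem geoRel_iff_eq_of_mem_geoSeg (hact : IsGraphAction T G) (hv : v ∈ GeoSeg G T f)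
    (hw : w ∈ GeoSeg G T f) : geoRel hact v w ↔ v = w := by
  rw [geoRel_iff_exists_mem_finStab hact hv.1 hw.1]
  constructor
  · rintro ⟨g, hg, hgv⟩
    exact (geoSmul_eq_self_of_mem_geoSeg hact hv hg).symm.trans hgv
  · rintro rfl
    exact ⟨1, one_mem _, geoSmul_eq_self_of_mem_geoSeg hact hv (one_mem _)⟩

theorem smoothRel_geoRel_geoSeg [MeasurableSpace V] (hact : IsGraphAction T G)
    (f : Fin (n + 1) → V) : SmoothRel (fun a b : GeoSeg G T f => geoRel hact a b) := by
  simpa only [geoRel_iff_eq_of_mem_geoSeg hact (Subtype.prop _) (Subtype.prop _),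
    Subtype.coe_inj] using smoothRel_eq (GeoSeg G T f)

theorem isClosed_geoSeg [TopologicalSpace V] [T2Space V] [ContinuousConstSMul G V]
    (T : SimpleGraph V) (f : Fin (n + 1) → V) : IsClosed (GeoSeg G T f) := by
  have continuous_coord (k : ℕ) : Continuous fun v : Geo T => v.1 k :=
    (continuous_apply k).comp continuous_subtype_val
  have geoSeg_eq : GeoSeg G T f = (⋂ i : Fin (n + 1), {v | v.1 i = f i}) ∩
      ⋂ g ∈ finStab G f, ⋂ k, {v | g • v.1 k = v.1 k} := by
    ext v
    simp only [mem_geoSeg_iff, Set.mem_inter_iff, Set.mem_iInter, Set.mem_ofPred_eq]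
  rw [geoSeg_eq]
  refine .inter (isClosed_iInter fun i => ?_)
    (isClosed_biInter fun g _ => isClosed_iInter fun k => ?_)
  · exact isClosed_eq (continuous_coord i) continuous_const
  · exact isClosed_eq ((continuous_coord k).const_smul g) (continuous_coord k)

end GeodesicAction

theorem geoSeg_closed_and_smooth_general
    {V : Type*} [MeasurableSpace V] [TopologicalSpace V] [T2Space V]
    (T : SimpleGraph V) {G : Type*} [Group G] [MulAction G V] [ContinuousConstSMul G V]
    (hact : IsGraphAction T G)
    (n : ℕ) (f : Fin (n + 1) → V) (_hinj : Function.Injective f)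
    (_hadj : ∀ i : Fin n, T.Adj (f i.castSucc) (f i.succ)) :
    IsClosed (GeoSeg G T f) ∧
    (∀ v ∈ GeoSeg G T f, ∀ w ∈ GeoSeg G T f,
      (geoRel hact v w ↔ ∃ g ∈ finStab G f, geoSmul hact g v = w)) ∧
    (∀ v ∈ GeoSeg G T f, ∀ g ∈ finStab G f, geoSmul hact g v = v) ∧
    SmoothRel (fun a b : GeoSeg G T f => geoRel hact a b) :=
  ⟨isClosed_geoSeg T f,
    fun _ hv _ hw => geoRel_iff_exists_mem_finStab hact hv.1 hw.1,
    fun _ hv _ hg => geoSmul_eq_self_of_mem_geoSeg hact hv hg,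
    smoothRel_geoRel_geoSeg hact f⟩

theorem geoSeg_closed_and_smooth
    {V : Type*} [Countable V] [MeasurableSpace V] [DiscreteMeasurableSpace V]
    [TopologicalSpace V] [DiscreteTopology V]
    (T : SimpleGraph V) (hT : T.IsTree)
    {G : Type*} [Group G] [Countable G] [MulAction G V]
    (hact : IsGraphAction T G)
    (n : ℕ) (f : Fin (n + 1) → V) (hinj : Function.Injective f)
    (hadj : ∀ i : Fin n, T.Adj (f i.castSucc) (f i.succ)) :
    IsClosed (GeoSeg G T f) ∧
    (∀ v ∈ GeoSeg G T f, ∀ w ∈ GeoSeg G T f,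
      (geoRel hact v w ↔ ∃ g ∈ finStab G f, geoSmul hact g v = w)) ∧
    (∀ v ∈ GeoSeg G T f, ∀ g ∈ finStab G f, geoSmul hact g v = v) ∧
    SmoothRel (fun a b : GeoSeg G T f => geoRel hact a b) := by
  have : ContinuousConstSMul G V := ⟨fun _ => continuous_of_discreteTopology⟩
  exact geoSeg_closed_and_smooth_general T hact n f hinj hadj
end

section
/- Let G be a countable group acting on a countable tree T and let σ be a finite geodesic in T. Then the set Geo_σ(T) of infinite geodesics 𝐯 extending σ such that Stab_G(𝐯) is uniformly coamenable in Stab_G(σ) is a Borel subset of Geo(T). -/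
open MeasureTheory Function Filter

/-! ### STATEMENT 13 -/

/-- `Geo_σ(T)`: the infinite geodesics extending the finite geodesic `σ = f` whose
stabilizer is uniformly coamenable in the stabilizer of `σ`. -/
def GeoSegUC (G : Type*) {V : Type*} [Group G] [MulAction G V] (T : SimpleGraph V)
    {n : ℕ} (f : Fin (n + 1) → V) : Set (Geo T) :=
  {v : Geo T | (∀ i : Fin (n + 1), v.1 i.1 = f i) ∧
    UniformlyCoamenable ((ptwiseStab G v.1).subgroupOf (finStab G f))}

/-!
Fix a countable set `Q` of probability functions on `K = Stab_G(σ)` that is `ℓ¹`-dense among all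
of them. Pushforwards contract the `ℓ¹` distance, so Reiter functions survive small perturbations,
and uniform coamenability of `H ≤ K` can be tested with `ε = 1 / (m + 1)` and Reiter functions
from `Q`. Only countable quantifiers remain, and it suffices that the `ℓ¹` distance of two
pushforwards to `K ⧸ H` is measurable in a varying `H` as soon as every condition `k ∈ H` is. The
index set `K ⧸ H` of that `ℓ¹` sum varies too; pairing the difference of the pushforwards with its
sign rewrites it as a sum over the fixed countable group `K`.
-/

lemma exists_countable_forall_dist_lt {α E : Type*} [PseudoMetricSpace E]
    [SecondCountableTopology E] (φ : α → E) :
    ∃ D : Set α, D.Countable ∧ ∀ a, ∀ δ > 0, ∃ b ∈ D, dist (φ a) (φ b) < δ := by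
  let _ : PseudoMetricSpace α := PseudoMetricSpace.induced φ inferInstance
  have : SecondCountableTopology α :=
    (Topology.IsInducing.mk (f := φ) rfl).secondCountableTopology
  obtain ⟨D, hDc, hDd⟩ := TopologicalSpace.exists_countable_dense α
  exact ⟨D, hDc, fun a _ hδ => hDd.exists_dist_lt a hδ⟩

section L1dist

variable {A : Type*}

lemma l1dist_comm (p q : A → ℝ) : l1dist p q = l1dist q p := by
  simp only [l1dist, abs_sub_comm]

lemma l1dist_triangle {p q r : A → ℝ} (hp : Summable p) (hq : Summable q) (hr : Summable r) :
    l1dist p r ≤ l1dist p q + l1dist q r := by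
  unfold l1dist
  rw [← (hp.sub hq).abs.tsum_add (hq.sub hr).abs]
  exact (hp.sub hr).abs.tsum_le_tsum (fun a => abs_sub_le (p a) (q a) (r a))
    ((hp.sub hq).abs.add (hq.sub hr).abs)

lemma l1dist_eq_dist_toL1 [MeasurableSpace A] [MeasurableSingletonClass A] {p q : A → ℝ}
    (hp : Integrable p Measure.count) (hq : Integrable q Measure.count) :
    l1dist p q = dist (hp.toL1 p) (hq.toL1 q) := by
  rw [dist_edist, Integrable.edist_toL1_toL1, lintegral_count,
    ENNReal.tsum_toReal_eq fun a => edist_ne_top _ _]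
  simp only [l1dist, ← dist_edist, Real.dist_eq]

lemma exists_countable_l1dist_dense [Countable A] {P : Set (A → ℝ)} (hP : ∀ p ∈ P, Summable p) :
    ∃ Q ⊆ P, Q.Countable ∧ ∀ p ∈ P, ∀ δ > 0, ∃ q ∈ Q, l1dist p q < δ := by
  let _ : MeasurableSpace A := ⊤
  have hint (p : P) : Integrable p.1 Measure.count := integrable_count_iff.2 (hP p p.2).norm
  -- Makes the separability instance of `L¹(count)` available.
  have : Fact ((1 : ENNReal) ≠ ⊤) := ⟨ENNReal.one_ne_top⟩
  obtain ⟨D, hDc, hD⟩ := exists_countable_forall_dist_lt fun p : P => (hint p).toL1 p.1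
  refine ⟨Subtype.val '' D, Subtype.coe_image_subset P D, hDc.image _, fun p hp δ hδ => ?_⟩
  obtain ⟨q, hqD, hpq⟩ := hD ⟨p, hp⟩ δ hδ
  exact ⟨q, Set.mem_image_of_mem _ hqD, (l1dist_eq_dist_toL1 (hint ⟨p, hp⟩) (hint q)).trans_lt hpq⟩

/-- The sign of `u - v`, as a real function: pairing `u - v` with it computes `l1dist u v`. -/
noncomputable def diffSign (u v : A → ℝ) (a : A) : ℝ :=
  SignType.sign (u a - v a)

lemma diffSign_mul_sub (u v : A → ℝ) (a : A) : diffSign u v a * (u a - v a) = |u a - v a| :=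
  sign_mul_self _

lemma abs_diffSign_le_one (u v : A → ℝ) (a : A) : |diffSign u v a| ≤ 1 := by
  unfold diffSign
  cases SignType.sign (u a - v a) <;> simp

lemma summable_diffSign_mul {B : Type*} (u v : A → ℝ) (π : B → A) {p : B → ℝ} (hp : Summable p) :
    Summable fun b => diffSign u v (π b) * p b :=
  hp.abs.of_norm_bounded fun b => by
    rw [Real.norm_eq_abs, abs_mul]
    exact mul_le_of_le_one_left (abs_nonneg _) (abs_diffSign_le_one u v (π b))

lemma measurable_diffSign {Ω : Type*} [MeasurableSpace Ω] {B : Ω → Type*} {u v : ∀ ω, B ω → ℝ}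
    {b : ∀ ω, B ω} (hu : Measurable fun ω => u ω (b ω)) (hv : Measurable fun ω => v ω (b ω)) :
    Measurable fun ω => diffSign (u ω) (v ω) (b ω) := by
  have hsign : Measurable fun r : ℝ => (SignType.sign r : ℝ) := by
    simp only [sign_apply, apply_ite ((↑) : SignType → ℝ)]
    exact measurable_const.ite measurableSet_Ioi
      (measurable_const.ite measurableSet_Iio measurable_const)
  exact hsign.comp (hu.sub hv)

end L1dist

section Pushforward

variable {K X : Type*} [Group K] [MulAction K X] {p q : K → ℝ}

open Classical in
lemma pushMeasure_eq_tsum_ite (p : K → ℝ) (x y : X) :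
    pushMeasure p x y = ∑' g, if g • x = y then p g else 0 :=
  tsum_subtype {g : K | g • x = y} p

lemma hasSum_mul_pushMeasure {φ : X → ℝ} {x : X} (h : Summable fun g => φ (g • x) * p g) :
    HasSum (fun y => φ y * pushMeasure p x y) (∑' g, φ (g • x) * p g) := by
  have hsigma := (Equiv.sigmaFiberEquiv fun g : K => g • x).hasSum_iff.2 h.hasSum
  have hfiber (y : X) :
      ∑' g : {g : K // g • x = y}, φ (g.1 • x) * p g.1 = φ y * pushMeasure p x y := by
    rw [pushMeasure, ← tsum_mul_left]
    exact tsum_congr fun g => by rw [g.2]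
  exact hsigma.sigma fun y => hfiber y ▸ (hsigma.summable.sigma_factor y).hasSum

lemma summable_pushMeasure (hp : Summable p) (x : X) : Summable (pushMeasure p x) := by
  simpa using (hasSum_mul_pushMeasure (φ := 1) (x := x) (by simpa using hp)).summable

lemma l1dist_pushMeasure (hp : Summable p) (hq : Summable q) (x x' : X) :
    l1dist (pushMeasure p x) (pushMeasure q x') =
      ∑' g, diffSign (pushMeasure p x) (pushMeasure q x') (g • x) * p g -
        ∑' g, diffSign (pushMeasure p x) (pushMeasure q x') (g • x') * q g := by
  set s := diffSign (pushMeasure p x) (pushMeasure q x')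
  have hsum := (hasSum_mul_pushMeasure (φ := s) (summable_diffSign_mul _ _ (· • x) hp)).sub
    (hasSum_mul_pushMeasure (φ := s) (summable_diffSign_mul _ _ (· • x') hq))
  rw [← hsum.tsum_eq]
  exact tsum_congr fun y => by rw [← diffSign_mul_sub, mul_sub]

lemma l1dist_pushMeasure_le (hp : Summable p) (hq : Summable q) (x : X) :
    l1dist (pushMeasure p x) (pushMeasure q x) ≤ l1dist p q := by
  set s := diffSign (pushMeasure p x) (pushMeasure q x)
  have hsp : Summable fun g => s (g • x) * p g := summable_diffSign_mul _ _ _ hp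
  have hsq : Summable fun g => s (g • x) * q g := summable_diffSign_mul _ _ _ hq
  rw [l1dist_pushMeasure hp hq, ← hsp.tsum_sub hsq]
  refine (hsp.sub hsq).tsum_le_tsum (fun g => ?_) (hp.sub hq).abs
  calc s (g • x) * p g - s (g • x) * q g
      ≤ |s (g • x)| * |p g - q g| := by rw [← mul_sub, ← abs_mul]; exact le_abs_self _
    _ ≤ |p g - q g| := mul_le_of_le_one_left (abs_nonneg _) (abs_diffSign_le_one _ _ _)

lemma IsReiterFun.of_l1dist_lt {S : Finset K} {ε δ : ℝ} (hp : IsReiterFun X S ε p)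
    (hq : IsProbFun q) (hpq : l1dist p q < δ) : IsReiterFun X S (ε + 2 * δ) q := by
  refine ⟨hq, fun s hs x => ?_⟩
  have hps := hp.1.2.summable
  have hqs := hq.2.summable
  calc l1dist (pushMeasure q x) (pushMeasure q (s • x))
      ≤ l1dist (pushMeasure q x) (pushMeasure p x) +
          (l1dist (pushMeasure p x) (pushMeasure p (s • x)) +
            l1dist (pushMeasure p (s • x)) (pushMeasure q (s • x))) := by
        have hpx (y : X) := summable_pushMeasure hps y
        have hqx (y : X) := summable_pushMeasure hqs y
        grw [← l1dist_triangle (hpx x) (hpx (s • x)) (hqx (s • x)),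
          ← l1dist_triangle (hqx x) (hpx x) (hqx (s • x))]
    _ < δ + (ε + δ) := by
        gcongr
        · exact (l1dist_pushMeasure_le hqs hps x).trans_lt (l1dist_comm q p ▸ hpq)
        · exact hp.2 s hs x
        · exact (l1dist_pushMeasure_le hps hqs (s • x)).trans_lt hpq
    _ = ε + 2 * δ := by ring

lemma IsReiterFun.mono {S : Finset K} {ε ε' : ℝ} (hp : IsReiterFun X S ε p) (h : ε ≤ ε') :
    IsReiterFun X S ε' p :=
  ⟨hp.1, fun s hs x => (hp.2 s hs x).trans_le h⟩

end Pushforward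

section UniformlyCoamenable

variable {K : Type*} [Group K]

lemma uniformlyCoamenable_iff_of_l1dist_dense {Q : Set (K → ℝ)} (hQ : ∀ q ∈ Q, IsProbFun q)
    (hdense : ∀ p, IsProbFun p → ∀ δ > 0, ∃ q ∈ Q, l1dist p q < δ) (H : Subgroup K) :
    UniformlyCoamenable H ↔
      ∀ (S : Finset K) (m : ℕ), ∃ q ∈ Q, IsReiterFun (K ⧸ H) S (1 / (m + 1)) q := by
  constructor
  · intro h S m
    have hε : (0 : ℝ) < 1 / (m + 1) := Nat.one_div_pos_of_nat
    obtain ⟨p, hp⟩ := h S (1 / (m + 1) / 2) (half_pos hε)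
    obtain ⟨q, hqQ, hpq⟩ := hdense p hp.1 (1 / (m + 1) / 4) (by positivity)
    exact ⟨q, hqQ, (hp.of_l1dist_lt (hQ q hqQ) hpq).mono (by linarith)⟩
  · intro h S ε hε
    obtain ⟨m, hm⟩ := exists_nat_one_div_lt hε
    obtain ⟨q, -, hq⟩ := h S m
    exact ⟨q, hq.mono hm.le⟩

section Measurability

variable [Countable K] {Ω : Type*} [MeasurableSpace Ω] {H : Ω → Subgroup K} {q : K → ℝ}

lemma measurable_pushMeasure_mk (hH : ∀ k, MeasurableSet {ω | k ∈ H ω}) (k c : K) :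
    Measurable fun ω => pushMeasure q (k : K ⧸ H ω) c := by
  classical
  have hcoset (g : K) : MeasurableSet {ω | g • (k : K ⧸ H ω) = c} := by
    have : {ω | g • (k : K ⧸ H ω) = c} = {ω | (g * k)⁻¹ * c ∈ H ω} :=
      Set.ext fun ω => QuotientGroup.eq
    exact this ▸ hH _
  simp only [pushMeasure_eq_tsum_ite]
  exact Measurable.tsum fun g => measurable_const.ite (hcoset g) measurable_const

lemma measurable_l1dist_pushMeasure_mk (hH : ∀ k, MeasurableSet {ω | k ∈ H ω}) (hq : Summable q)
    (k l : K) :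
    Measurable fun ω => l1dist (pushMeasure q (k : K ⧸ H ω)) (pushMeasure q (l : K ⧸ H ω)) := by
  simp only [l1dist_pushMeasure hq hq]
  have hsign (c : K) : Measurable fun ω =>
      diffSign (pushMeasure q (k : K ⧸ H ω)) (pushMeasure q (l : K ⧸ H ω)) c :=
    measurable_diffSign (measurable_pushMeasure_mk hH k c) (measurable_pushMeasure_mk hH l c)
  exact (Measurable.tsum fun g => (hsign (g * k)).mul_const (q g)).sub
    (Measurable.tsum fun g => (hsign (g * l)).mul_const (q g))

lemma measurableSet_isReiterFun (hH : ∀ k, MeasurableSet {ω | k ∈ H ω}) (hq : IsProbFun q)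
    (S : Finset K) (ε : ℝ) : MeasurableSet {ω | IsReiterFun (K ⧸ H ω) S ε q} := by
  simp only [IsReiterFun, hq, true_and, QuotientGroup.mk_surjective.forall, Set.ofPred_forall]
  exact S.measurableSet_biInter fun s _ => MeasurableSet.iInter fun k =>
    measurableSet_lt (measurable_l1dist_pushMeasure_mk hH hq.2.summable k (s * k)) measurable_const

theorem measurableSet_uniformlyCoamenable (hH : ∀ k, MeasurableSet {ω | k ∈ H ω}) :
    MeasurableSet {ω | UniformlyCoamenable (H ω)} := by
  obtain ⟨Q, hQ, hQc, hdense⟩ :=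
    exists_countable_l1dist_dense (P := {p : K → ℝ | IsProbFun p}) fun _ hp => hp.2.summable
  simp only [uniformlyCoamenable_iff_of_l1dist_dense hQ hdense, Set.ofPred_forall]
  refine MeasurableSet.iInter fun S => MeasurableSet.iInter fun m => ?_
  simp only [← exists_prop, Set.ofPred_exists]
  exact MeasurableSet.biUnion hQc fun q hq => measurableSet_isReiterFun hH (hQ hq) S _

end Measurability

end UniformlyCoamenable

section Geo

variable {V : Type*} [MeasurableSpace V]

lemma measurable_geo_apply (T : SimpleGraph V) (k : ℕ) : Measurable fun v : Geo T => v.1 k :=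
  (measurable_pi_apply k).comp measurable_subtype_coe

lemma measurableSet_geo_extends [MeasurableSingletonClass V] (T : SimpleGraph V)
    {n : ℕ} (f : Fin n → V) :
    MeasurableSet {v : Geo T | ∀ i : Fin n, v.1 i = f i} := by
  rw [Set.ofPred_forall]
  exact MeasurableSet.iInter fun i => measurable_geo_apply T i (measurableSet_singleton (f i))

variable [DiscreteMeasurableSpace V] {G : Type*} [Group G] [MulAction G V]

lemma measurableSet_mem_ptwiseStab (T : SimpleGraph V) (g : G) :
    MeasurableSet {v : Geo T | g ∈ ptwiseStab G v.1} := by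
  have hstab : {v : Geo T | g ∈ ptwiseStab G v.1} =
      ⋂ k, (fun v : Geo T => v.1 k) ⁻¹' {x | g • x = x} := Set.ofPred_forall _
  rw [hstab]
  exact MeasurableSet.iInter fun k => measurable_geo_apply T k .of_discrete

theorem geoSegUC_borel_general [Countable G] (T : SimpleGraph V) {n : ℕ} (f : Fin (n + 1) → V) :
    MeasurableSet (GeoSegUC G T f) :=
  (measurableSet_geo_extends T f).inter <|
    measurableSet_uniformlyCoamenable fun k : finStab G f => measurableSet_mem_ptwiseStab T k.1

end Geo

theorem geoSegUC_borel
    {V : Type*} [Countable V] [MeasurableSpace V] [DiscreteMeasurableSpace V]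
    (T : SimpleGraph V) (hT : T.IsTree)
    {G : Type*} [Group G] [Countable G] [MulAction G V]
    (hact : IsGraphAction T G)
    (n : ℕ) (f : Fin (n + 1) → V) (hinj : Function.Injective f)
    (hadj : ∀ i : Fin n, T.Adj (f i.castSucc) (f i.succ)) :
    MeasurableSet (GeoSegUC G T f) := by
  exact geoSegUC_borel_general T f
end
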